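/- arXiv:2507.03827 — 4 statements merged into one kernel-verified Lean document; each statement's English description precedes it below -/
import Mathlib

section
/- Let 𝒜 be a first-order structure in Struc_{c1,c2} and consider the properties: (a) 𝒜 contains id_{U_𝒜} among its relations; (b) id_{U_𝒜} ∈ DEC_𝒜; (c) id_{U_𝒜} ∈ SDEC_𝒜; (d) {c1} ∈ SDEC_𝒜 and {c2} ∈ SDEC_𝒜; (e) {c1,c2}^∞ ∈ SDEC_𝒜. Then (a) implies (b), (b) implies (c), (c) implies (d), and (d) implies (e). -/
/-!
The implication from the identity relation to its decidability is a four-instruction program, and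
decidability trivially gives semi-decidability. The other two implications rest on one observation.

A machine halting on one given input accepts it for a finite and explicit reason. Follow the
halting computation on that input: it is a finite path. Index registers evolve
independently of the register contents, so whatever else sits in the registers, the machine takes
the same path (and halts) as soon as the finitely many relation tests on the path have the same
outcome. Renaming registers turns the path into a loop-free sequence of operations, constant
assignments and tests in which copy instructions have disappeared, all registers are addressed
directly and results go to fresh registers (`exists_test`). A machine semi-deciding `{c}` thus
yields such a test for `x = c` (`exists_test_const`), which always terminates; and a machine
semi-deciding the identity yields, from its path on `(c, c)`, a test for `x = c` as well
(`exists_test_id`). Compiled into a program behind a length check, the latter semi-decides `{c}`.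

To semi-decide the tuples over `{c₁, c₂}`, the tests for `c₁` and `c₂` are applied to one component
after the other. As the tests always terminate, no dovetailing is needed, and as they use
boundedly many registers, it suffices to move the input above this bound first. Register `0` needs
separate treatment: index registers never have the value `0`, so the first component cannot be
copied, and it is tested in place with tests reading register `0` instead of register `1`.
-/

/-!
A formalization of BSS RAMs over first-order structures (following C. Gaßner,
"Abstract computation over first-order structures", Part II b).

We model a first-order structure with indexed constants, operations and
relations, machines given by finite programs of labeled instructions
(including binary non-deterministic branching `orGoto` and Moschovakis'
`ν`-operator instructions `nuGuess`), configurations, the (non-deterministic)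
transition relation, halting sets, semi-decidability and decidability, the
various non-deterministic machine classes and their result functions.
-/

/-- A first-order structure: a universe together with indexed constants,
operations and relations. -/
structure FOStruct where
  U : Type
  constIdx : Type
  consts : constIdx → U
  opIdx : Type
  ops : opIdx → List U → U
  relIdx : Type
  rels : relIdx → List U → Prop

/-- `U^∞`: all finite nonempty tuples over the universe of `A`. -/
abbrev Tup (A : FOStruct) : Type := { l : List A.U // l ≠ [] }

/-- Instructions of BSS RAMs over `A`.  The first seven kinds are the
deterministic instruction types; `orGoto` is the binary non-deterministic
branching instruction `goto ℓ₁ or goto ℓ₂`; `nuGuess j` is a ν-oracle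
instruction writing a non-deterministically chosen tuple of the oracle set
into the registers `Z_j, Z_{j+1}, …`. -/
inductive Instr (A : FOStruct) : Type where
  | apply (j : ℕ) (i : A.opIdx) (args : List ℕ)
  | const (j : ℕ) (i : A.constIdx)
  | copy (j k : ℕ)
  | branchRel (i : A.relIdx) (args : List ℕ) (l₁ l₂ : ℕ)
  | branchIdx (j k l₁ l₂ : ℕ)
  | incIdx (j : ℕ)
  | resetIdx (j : ℕ)
  | orGoto (l₁ l₂ : ℕ)
  | nuGuess (j : ℕ)

/-- A configuration: current label, index registers, and `Z`-registers. -/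
structure Config (A : FOStruct) where
  label : ℕ
  idx : ℕ → ℕ
  reg : ℕ → A.U

/-- A machine: a finite program together with an oracle set (only used by
`nuGuess` instructions). -/
structure Machine (A : FOStruct) where
  prog : List (Instr A)
  oracle : Set (Tup A)

open scoped Classical in
/-- Execution of a deterministic instruction. -/
noncomputable def execDet {A : FOStruct} (ins : Instr A) (c : Config A) : Config A :=
  match ins with
  | .apply j i args =>
      { c with label := c.label + 1, reg := Function.update c.reg j (A.ops i (args.map c.reg)) }
  | .const j i =>
      { c with label := c.label + 1, reg := Function.update c.reg j (A.consts i) }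
  | .copy j k =>
      { c with label := c.label + 1, reg := Function.update c.reg (c.idx j) (c.reg (c.idx k)) }
  | .branchRel i args l₁ l₂ =>
      { c with label := if A.rels i (args.map c.reg) then l₁ else l₂ }
  | .branchIdx j k l₁ l₂ =>
      { c with label := if c.idx j = c.idx k then l₁ else l₂ }
  | .incIdx j =>
      { c with label := c.label + 1, idx := Function.update c.idx j (c.idx j + 1) }
  | .resetIdx j =>
      { c with label := c.label + 1, idx := Function.update c.idx j 1 }
  | .orGoto l₁ _ => { c with label := l₁ }
  | .nuGuess _ => { c with label := c.label + 1 }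

/-- Write the components of the list `l` into the registers `j, j+1, …`. -/
def writeFrom {A : FOStruct} (reg : ℕ → A.U) (j : ℕ) (l : List A.U) : ℕ → A.U :=
  fun i => if j ≤ i ∧ i - j < l.length then l.getD (i - j) (reg i) else reg i

/-- The (in general non-deterministic) one-step transition relation of `M`. -/
def NStep {A : FOStruct} (M : Machine A) (c c' : Config A) : Prop :=
  ∃ ins, M.prog[c.label]? = some ins ∧
    match ins with
    | Instr.orGoto l₁ l₂ => c' = { c with label := l₁ } ∨ c' = { c with label := l₂ }
    | Instr.nuGuess j =>
        ∃ y ∈ M.oracle, c' = { c with label := c.label + 1, reg := writeFrom c.reg j y.1 }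
    | _ => c' = execDet ins c

/-- Reachability of configurations. -/
def Reaches {A : FOStruct} (M : Machine A) : Config A → Config A → Prop :=
  Relation.ReflTransGen (NStep M)

/-- A configuration is halted if its label is the stop label (or beyond the
program). -/
def Halted {A : FOStruct} (M : Machine A) (c : Config A) : Prop := M.prog.length ≤ c.label

/-- Some computation of `M` starting in `c` reaches the stop instruction. -/
def HaltsFrom {A : FOStruct} (M : Machine A) (c : Config A) : Prop :=
  ∃ c', Reaches M c c' ∧ Halted M c'

/-- The initial configuration for the input tuple `x` (single-valued input
function (I1)): `(1 . (n,1,…,1) . x . (x_n, x_n, …))`. -/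
def inputConfig (A : FOStruct) (x : Tup A) : Config A :=
  { label := 0
    idx := fun j => if j = 1 then x.1.length else 1
    reg := fun i => x.1.getD i (x.1.getLast x.2) }

/-- The initial configuration for input `x` together with a guessed tuple `y`
(multi-valued input function (I3′)): `((n,1,…,1) . x . y . (x_n, x_n, …))`. -/
def inputConfigG (A : FOStruct) (x y : Tup A) : Config A :=
  { label := 0
    idx := fun j => if j = 1 then x.1.length else 1
    reg := fun i => (x.1 ++ y.1).getD i (x.1.getLast x.2) }

/-- The output of a configuration: the tuple `(u_1, …, u_{ν₁})`. -/
def output {A : FOStruct} (c : Config A) : Tup A :=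
  ⟨(List.range (max (c.idx 1) 1)).map c.reg, by
    intro hcon
    have h1 := congrArg List.length hcon
    simp only [List.length_map, List.length_range, List.length_nil] at h1
    omega⟩

/-- All outputs of halting computations of `M` starting in `c`. -/
def ResFrom {A : FOStruct} (M : Machine A) (c : Config A) : Set (Tup A) :=
  { z | ∃ c', Reaches M c c' ∧ Halted M c' ∧ output c' = z }

/-- The result function of `M` (for machines with input function (I1)). -/
def Res {A : FOStruct} (M : Machine A) (x : Tup A) : Set (Tup A) :=
  ResFrom M (inputConfig A x)

/-- Deterministic instructions: neither `orGoto` nor `nuGuess`. -/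
def Instr.isDet {A : FOStruct} : Instr A → Prop
  | .orGoto _ _ => False
  | .nuGuess _ => False
  | _ => True

/-- Instructions allowed in `M_A^{NDB}`-machines: no ν-instructions. -/
def Instr.noNu {A : FOStruct} : Instr A → Prop
  | .nuGuess _ => False
  | _ => True

/-- Instructions allowed in ν-oracle machines: no binary branching. -/
def Instr.noOr {A : FOStruct} : Instr A → Prop
  | .orGoto _ _ => False
  | _ => True

/-- `M` is a deterministic BSS RAM (a machine in `M_A`). -/
def Machine.Det {A : FOStruct} (M : Machine A) : Prop := ∀ ins ∈ M.prog, ins.isDet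

/-- `M` is a machine in `M_A^{NDB}` (binary non-deterministic branching
allowed). -/
def Machine.NDB {A : FOStruct} (M : Machine A) : Prop := ∀ ins ∈ M.prog, ins.noNu

/-- `M` is a ν-oracle machine in `M_A^ν(Q)`. -/
def Machine.NuMach {A : FOStruct} (M : Machine A) (Q : Set (Tup A)) : Prop :=
  (∀ ins ∈ M.prog, ins.noOr) ∧ M.oracle = Q

/-- `SDEC_A`: the class of problems semi-decidable by a deterministic
BSS RAM in `M_A`. -/
def SDEC (A : FOStruct) : Set (Set (Tup A)) :=
  { P | ∃ M : Machine A, M.Det ∧ ∀ x, x ∈ P ↔ HaltsFrom M (inputConfig A x) }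

/-- `DEC_A`: the class of decidable problems. -/
def DEC (A : FOStruct) : Set (Set (Tup A)) :=
  { P | P ∈ SDEC A ∧ Pᶜ ∈ SDEC A }

/-- `SDEC_A^{NDB}`: semi-decidability by machines with binary
non-deterministic branchings. -/
def SDECndb (A : FOStruct) : Set (Set (Tup A)) :=
  { P | ∃ M : Machine A, M.NDB ∧ ∀ x, x ∈ P ↔ HaltsFrom M (inputConfig A x) }

/-- `(SDEC_A^ν)^Q`: semi-decidability by ν-oracle machines with oracle `Q`. -/
def SDECnu (A : FOStruct) (Q : Set (Tup A)) : Set (Set (Tup A)) :=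
  { P | ∃ M : Machine A, M.NuMach Q ∧ ∀ x, x ∈ P ↔ HaltsFrom M (inputConfig A x) }

/-- A tuple is digital (w.r.t. `c₁, c₂`) if all its components are among the
two constants. -/
def Digital {A : FOStruct} (c₁ c₂ : A.U) (y : Tup A) : Prop := ∀ u ∈ y.1, u = c₁ ∨ u = c₂

/-- `SDEC_A^{ND}`: acceptance by machines guessing arbitrary tuples. -/
def SDECnd (A : FOStruct) : Set (Set (Tup A)) :=
  { P | ∃ M : Machine A, M.Det ∧ ∀ x, x ∈ P ↔ ∃ y : Tup A, HaltsFrom M (inputConfigG A x y) }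

/-- `SDEC_A^{DND}`: acceptance by digitally non-deterministic machines whose
guesses range over tuples of the two constants. -/
def SDECdnd (A : FOStruct) (c₁ c₂ : A.U) : Set (Set (Tup A)) :=
  { P | ∃ M : Machine A, M.Det ∧
      ∀ x, x ∈ P ↔ ∃ y : Tup A, Digital c₁ c₂ y ∧ HaltsFrom M (inputConfigG A x y) }

/-- The result function of a machine used non-deterministically with guesses
ranging over all tuples. -/
def ResND {A : FOStruct} (M : Machine A) (x : Tup A) : Set (Tup A) :=
  { z | ∃ y : Tup A, z ∈ ResFrom M (inputConfigG A x y) }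

/-- The result function of a digitally non-deterministic machine. -/
def ResDND {A : FOStruct} (c₁ c₂ : A.U) (M : Machine A) (x : Tup A) : Set (Tup A) :=
  { z | ∃ y : Tup A, Digital c₁ c₂ y ∧ z ∈ ResFrom M (inputConfigG A x y) }

/-- The identity relation `id_{U_A}` viewed as a decision problem
(the set of pairs `(x, x)`). -/
def idSet (A : FOStruct) : Set (Tup A) := { p | ∃ x : A.U, p.1 = [x, x] }

/-- The one-component tuple `(c)`. -/
def singTup (A : FOStruct) (c : A.U) : Tup A := ⟨[c], by simp⟩

/-- The singleton `{c}` viewed as a decision problem. -/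
def singSet (A : FOStruct) (c : A.U) : Set (Tup A) := { p | p.1 = [c] }

/-- The two-element set `{c₁, c₂}` viewed as a decision problem. -/
def constPair (A : FOStruct) (c₁ c₂ : A.U) : Set (Tup A) := { p | p.1 = [c₁] ∨ p.1 = [c₂] }

/-- `{c₁,c₂}^∞`: all finite nonempty tuples over the two constants. -/
def binTups (A : FOStruct) (c₁ c₂ : A.U) : Set (Tup A) := { p | ∀ u ∈ p.1, u = c₁ ∨ u = c₂ }

/-- `{c₁,c₂}²`: all pairs over the two constants. -/
def pairTups (A : FOStruct) (c₁ c₂ : A.U) : Set (Tup A) :=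
  { p | ∃ u v : A.U, (u = c₁ ∨ u = c₂) ∧ (v = c₁ ∨ v = c₂) ∧ p.1 = [u, v] }

open scoped Classical in
/-- The characteristic function `χ_P` with values `c₁` (yes) and `c₂` (no). -/
noncomputable def chi (A : FOStruct) (c₁ c₂ : A.U) (P : Set (Tup A)) (x : Tup A) : Tup A :=
  if x ∈ P then singTup A c₁ else singTup A c₂

/-- `M` (a deterministic BSS RAM) computes the total function `f`. -/
def ComputesFn (A : FOStruct) (M : Machine A) (f : Tup A → Tup A) : Prop :=
  M.Det ∧ ∀ x, Res M x = {f x}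

/-- `A` contains the identity relation `id_{U_A}` among its relations. -/
def HasIdRel (A : FOStruct) : Prop := ∃ r : A.relIdx, ∀ x y : A.U, A.rels r [x, y] ↔ x = y

/-- `c` is a constant of the structure `A`. -/
def HasConst (A : FOStruct) (c : A.U) : Prop := ∃ i : A.constIdx, A.consts i = c

/-- The class of result functions of deterministic machines. -/
def ResClassDet (A : FOStruct) : Set (Tup A → Set (Tup A)) :=
  { f | ∃ M : Machine A, M.Det ∧ f = Res M }

/-- `{Res_M | M ∈ M_A^{NDB}}`. -/
def ResClassNDB (A : FOStruct) : Set (Tup A → Set (Tup A)) :=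
  { f | ∃ M : Machine A, M.NDB ∧ f = Res M }

/-- `{Res_M | M ∈ M_A^ν(Q)}`. -/
def ResClassNu (A : FOStruct) (Q : Set (Tup A)) : Set (Tup A → Set (Tup A)) :=
  { f | ∃ M : Machine A, M.NuMach Q ∧ f = Res M }

/-- `{Res_M | M ∈ M_A^{ND}}`. -/
def ResClassND (A : FOStruct) : Set (Tup A → Set (Tup A)) :=
  { f | ∃ M : Machine A, M.Det ∧ f = ResND M }

/-- `{Res_M | M ∈ M_A^{DND}}`. -/
def ResClassDND (A : FOStruct) (c₁ c₂ : A.U) : Set (Tup A → Set (Tup A)) :=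
  { f | ∃ M : Machine A, M.Det ∧ f = ResDND c₁ c₂ M }

namespace BSSChain

open Function

variable {A : FOStruct}

/-! ### Deterministic runs -/

theorem nstep_iff {M : Machine A} (hM : M.Det) {c d : Config A} {ins : Instr A}
    (h : M.prog[c.label]? = some ins) : NStep M c d ↔ d = execDet ins c := by
  have hd := hM ins (List.mem_of_getElem? h)
  constructor
  · rintro ⟨ins', h', hs⟩
    obtain rfl : ins = ins' := by simpa [h] using h'
    cases ins <;> first | exact hs | exact hd.elim
  · intro e
    refine ⟨ins, h, ?_⟩
    cases ins <;> first | exact e | exact hd.elim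

theorem not_halted_of_get {M : Machine A} {c : Config A} {ins : Instr A}
    (h : M.prog[c.label]? = some ins) : ¬ Halted M c := by
  obtain ⟨h', -⟩ := List.getElem?_eq_some_iff.1 h
  exact Nat.not_le.2 h'

/-- For deterministic machines halting is invariant under execution of one instruction, in both
directions. -/
theorem haltsFrom_step {M : Machine A} (hM : M.Det) {c : Config A} {ins : Instr A}
    (h : M.prog[c.label]? = some ins) : HaltsFrom M c ↔ HaltsFrom M (execDet ins c) := by
  constructor
  · rintro ⟨d, hr, hd⟩
    rcases Relation.ReflTransGen.cases_head hr with rfl | ⟨e, he, hr'⟩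
    · exact (not_halted_of_get h hd).elim
    · rw [nstep_iff hM h] at he
      subst he
      exact ⟨d, hr', hd⟩
  · rintro ⟨d, hr, hd⟩
    exact ⟨d, Relation.ReflTransGen.head ((nstep_iff hM h).2 rfl) hr, hd⟩

theorem haltsFrom_of_halted {M : Machine A} {c : Config A} (h : M.prog.length ≤ c.label) :
    HaltsFrom M c := ⟨c, Relation.ReflTransGen.refl, h⟩

/-- An instruction jumping to its own label is a trap: the machine never leaves it. -/
theorem not_haltsFrom_trap {M : Machine A} (hM : M.Det) {c : Config A}
    (h : M.prog[c.label]? = some (.branchIdx 0 0 c.label c.label)) : ¬ HaltsFrom M c := by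
  rintro ⟨d, hr, hd⟩
  have : d = c := by
    clear hd
    induction hr with
    | refl => rfl
    | tail _ hs ih =>
      subst ih
      rw [nstep_iff hM h] at hs
      simpa [execDet] using hs
  subst this
  exact not_halted_of_get h hd

/-- The program of `M` contains the instruction block `is` at the labels `s, s + 1, …`. -/
def At (M : Machine A) (s : ℕ) (is : List (Instr A)) : Prop :=
  ∀ t < is.length, M.prog[s + t]? = is[t]?

theorem At.cons {M : Machine A} {s : ℕ} {a : Instr A} {is : List (Instr A)}
    (h : At M s (a :: is)) : M.prog[s]? = some a ∧ At M (s + 1) is := by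
  refine ⟨by simpa using h 0 (by simp), fun t ht => ?_⟩
  have := h (t + 1) (by simpa using ht)
  rw [Nat.add_assoc, Nat.add_comm 1 t]
  simpa using this

theorem At.append {M : Machine A} {s : ℕ} {is js : List (Instr A)}
    (h : At M s (is ++ js)) : At M s is ∧ At M (s + is.length) js := by
  refine ⟨fun t ht => ?_, fun t ht => ?_⟩
  · rw [h t (by simp; omega), List.getElem?_append_left ht]
  · rw [Nat.add_assoc, h (is.length + t) (by simp; omega),
      List.getElem?_append_right (by omega)]
    simp

theorem at_self (M : Machine A) : At M 0 M.prog := fun t _ => by simp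

/-! ### Straight-line tests -/

/-- An instruction of a loop-free test: an operation, a constant assignment, or the demand that
a relation has the truth value `v`. All registers are addressed directly. -/
inductive SL (A : FOStruct) : Type where
  | op (r : ℕ) (i : A.opIdx) (args : List ℕ)
  | const (r : ℕ) (i : A.constIdx)
  | test (i : A.relIdx) (args : List ℕ) (v : Bool)

/-- The register contents `R` satisfy every demand met while executing the test. -/
def Passes : List (SL A) → (ℕ → A.U) → Prop
  | [], _ => True
  | .op r i args :: t, R => Passes t (update R r (A.ops i (args.map R)))
  | .const r i :: t, R => Passes t (update R r (A.consts i))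
  | .test i args v :: t, R => (A.rels i (args.map R) ↔ v = true) ∧ Passes t R

/-- The registers written by a straight-line test. -/
def writes : List (SL A) → List ℕ
  | [] => []
  | .op r _ _ :: t => r :: writes t
  | .const r _ :: t => r :: writes t
  | .test _ _ _ :: t => writes t

/-- Machine code, placed at label `s`, of a straight-line test: a violated demand leads to the
label `e`, and a passed test leads to the first label behind the block. -/
def compile (e : ℕ) : ℕ → List (SL A) → List (Instr A)
  | _, [] => []
  | s, .op r i args :: t => .apply r i args :: compile e (s + 1) t
  | s, .const r i :: t => .const r i :: compile e (s + 1) t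
  | s, .test i args v :: t =>
      .branchRel i args (bif v then s + 1 else e) (bif v then e else s + 1) :: compile e (s + 1) t

@[simp] theorem length_compile (e s : ℕ) (code : List (SL A)) :
    (compile e s code).length = code.length := by
  induction code generalizing s with
  | nil => rfl
  | cons a t ih => cases a <;> simp [compile, ih]

theorem compile_det (e s : ℕ) (code : List (SL A)) : ∀ ins ∈ compile e s code, ins.isDet := by
  induction code generalizing s with
  | nil => simp [compile]
  | cons a t ih => cases a <;> simpa [compile, Instr.isDet] using ih (s + 1)

open scoped Classical in
/-- Running a compiled test: only the registers it writes change, and the outcome decides the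
label reached. -/
theorem haltsFrom_compile {M : Machine A} (hM : M.Det) {e : ℕ} (code : List (SL A)) (s : ℕ)
    (hat : At M s (compile e s code)) (idx : ℕ → ℕ) (R : ℕ → A.U) :
    ∃ R' : ℕ → A.U, (∀ j, j ∉ writes code → R' j = R j) ∧
      (HaltsFrom M ⟨s, idx, R⟩ ↔
        HaltsFrom M ⟨if Passes code R then s + code.length else e, idx, R'⟩) := by
  induction code generalizing s R with
  | nil => exact ⟨R, fun _ _ => rfl, by simp [Passes]⟩
  | cons a t ih =>
    cases a with
    | op r i args =>
      obtain ⟨h0, h1⟩ := At.cons hat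
      obtain ⟨R', hR, hh⟩ := ih (s + 1) h1 (update R r (A.ops i (args.map R)))
      refine ⟨R', fun j hj => ?_, ?_⟩
      · simp only [writes, List.mem_cons, not_or] at hj
        rw [hR j hj.2, update_of_ne hj.1]
      · rw [haltsFrom_step hM h0, List.length_cons,
          show s + (t.length + 1) = s + 1 + t.length by omega]
        exact hh
    | const r i =>
      obtain ⟨h0, h1⟩ := At.cons hat
      obtain ⟨R', hR, hh⟩ := ih (s + 1) h1 (update R r (A.consts i))
      refine ⟨R', fun j hj => ?_, ?_⟩
      · simp only [writes, List.mem_cons, not_or] at hj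
        rw [hR j hj.2, update_of_ne hj.1]
      · rw [haltsFrom_step hM h0, List.length_cons,
          show s + (t.length + 1) = s + 1 + t.length by omega]
        exact hh
    | test i args v =>
      obtain ⟨h0, h1⟩ := At.cons hat
      by_cases hv : A.rels i (args.map R) ↔ v = true
      · obtain ⟨R', hR, hh⟩ := ih (s + 1) h1 R
        refine ⟨R', hR, ?_⟩
        rw [haltsFrom_step hM h0]
        have e1 : (execDet (.branchRel i args (bif v then s + 1 else e)
            (bif v then e else s + 1)) ⟨s, idx, R⟩ : Config A) = ⟨s + 1, idx, R⟩ := by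
          cases v <;> simp_all [execDet]
        rw [e1, hh]
        simp [Passes, hv, Nat.add_assoc, Nat.add_comm 1]
      · refine ⟨R, fun _ _ => rfl, ?_⟩
        rw [haltsFrom_step hM h0]
        have e1 : (execDet (.branchRel i args (bif v then s + 1 else e)
            (bif v then e else s + 1)) ⟨s, idx, R⟩ : Config A) = ⟨e, idx, R⟩ := by
          cases v <;> simp_all [execDet]
        rw [e1]
        simp [Passes, hv]

/-! ### Unrolling one halting computation -/

/-- The relation tests along one halting computation of `M`, written as a straight-line test.
The registers of `M` are renamed by `ρ`: a copy instruction of `M` only changes the renaming,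
and operations write to fresh registers, from `b` on. Whatever the register contents, passing the
test means following the same computation path, hence halting. -/
theorem exists_test {M : Machine A} (hM : M.Det) {c c' : Config A} (h : Reaches M c c')
    (hh : Halted M c') : ∀ (ρ : ℕ → ℕ) (b : ℕ), (∀ j, ρ j < b) →
    ∃ code : List (SL A), (∀ r ∈ writes code, b ≤ r) ∧ ∀ R : ℕ → A.U,
      (R ∘ ρ = c.reg → Passes code R) ∧
      (Passes code R → HaltsFrom M ⟨c.label, c.idx, R ∘ ρ⟩) := by
  induction h using Relation.ReflTransGen.head_induction_on with
  | refl =>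
    intro ρ b _
    exact ⟨[], by simp [writes], fun R => ⟨fun _ => trivial, fun _ => haltsFrom_of_halted hh⟩⟩
  | @head c d hs _ ih =>
    intro ρ b hρ
    obtain ⟨ins, hg, -⟩ := id hs
    rw [nstep_iff hM hg] at hs
    subst hs
    have hd := hM ins (List.mem_of_getElem? hg)
    have hstep : ∀ R : ℕ → A.U, HaltsFrom M ⟨c.label, c.idx, R⟩ ↔
        HaltsFrom M (execDet ins ⟨c.label, c.idx, R⟩) := fun R => haltsFrom_step hM hg
    -- A fresh register `b` receives the new value of register `j` of `M`.
    have hupd : ∀ (R : ℕ → A.U) (j : ℕ) (v : A.U),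
        update R b v ∘ update ρ j b = update (R ∘ ρ) j v := by
      intro R j v
      funext k
      by_cases hk : k = j
      · subst hk; simp
      · simp [hk, (hρ k).ne]
    have hρ' : ∀ j k, update ρ j b k < b + 1 := by
      intro j k
      by_cases hk : k = j
      · subst hk; simp
      · have := hρ k
        simp [hk]; omega
    cases ins with
    | apply j i args =>
      obtain ⟨code, hw, hc⟩ := ih (update ρ j b) (b + 1) (hρ' j)
      refine ⟨.op b i (args.map ρ) :: code, ?_, fun R => ?_⟩
      · intro r hr
        rcases List.mem_cons.1 hr with rfl | hr
        · exact le_rfl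
        · have := hw r hr; omega
      · obtain ⟨ha, hb⟩ := hc (update R b (A.ops i ((args.map ρ).map R)))
        simp only [hupd, List.map_map] at ha hb
        refine ⟨fun e => ?_, fun hp => ?_⟩
        · simp only [Passes, List.map_map]
          exact ha (by simp [execDet, e])
        · simp only [Passes, List.map_map] at hp
          rw [hstep]
          exact hb hp
    | const j i =>
      obtain ⟨code, hw, hc⟩ := ih (update ρ j b) (b + 1) (hρ' j)
      refine ⟨.const b i :: code, ?_, fun R => ?_⟩
      · intro r hr
        rcases List.mem_cons.1 hr with rfl | hr
        · exact le_rfl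
        · have := hw r hr; omega
      · obtain ⟨ha, hb⟩ := hc (update R b (A.consts i))
        simp only [hupd] at ha hb
        refine ⟨fun e => ha (by simp [execDet, e]), fun hp => ?_⟩
        rw [hstep]
        exact hb hp
    | copy j k =>
      obtain ⟨code, hw, hc⟩ := ih (update ρ (c.idx j) (ρ (c.idx k))) b (by
        intro l
        by_cases hl : l = c.idx j
        · subst hl; simp [hρ]
        · simp [hl, hρ])
      refine ⟨code, hw, fun R => ?_⟩
      obtain ⟨ha, hb⟩ := hc R
      have e1 : R ∘ update ρ (c.idx j) (ρ (c.idx k))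
          = update (R ∘ ρ) (c.idx j) ((R ∘ ρ) (c.idx k)) := by
        rw [comp_update]; rfl
      rw [e1] at ha hb
      refine ⟨fun e => ha (by simp only [execDet, e]), fun hp => ?_⟩
      rw [hstep]
      exact hb hp
    | branchRel i args l₁ l₂ =>
      obtain ⟨code, hw, hc⟩ := ih ρ b hρ
      classical
      refine ⟨.test i (args.map ρ) (decide (A.rels i (args.map c.reg))) :: code, hw,
        fun R => ?_⟩
      obtain ⟨ha, hb⟩ := hc R
      refine ⟨fun e => ⟨by simp [e, List.map_map], ha (by simp [execDet, e])⟩, ?_⟩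
      rintro ⟨h1, h2⟩
      rw [hstep]
      have h1' : A.rels i (args.map (R ∘ ρ)) ↔ A.rels i (args.map c.reg) := by
        simpa [List.map_map] using h1
      simpa only [execDet, h1'] using hb h2
    | branchIdx j k l₁ l₂ =>
      obtain ⟨code, hw, hc⟩ := ih ρ b hρ
      exact ⟨code, hw, fun R => ⟨fun e => (hc R).1 e, fun hp => (hstep _).2 ((hc R).2 hp)⟩⟩
    | incIdx j =>
      obtain ⟨code, hw, hc⟩ := ih ρ b hρ
      exact ⟨code, hw, fun R => ⟨fun e => (hc R).1 e, fun hp => (hstep _).2 ((hc R).2 hp)⟩⟩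
    | resetIdx j =>
      obtain ⟨code, hw, hc⟩ := ih ρ b hρ
      exact ⟨code, hw, fun R => ⟨fun e => (hc R).1 e, fun hp => (hstep _).2 ((hc R).2 hp)⟩⟩
    | orGoto => exact hd.elim
    | nuGuess => exact hd.elim

/-- If `{c}` is semi-decidable, then equality of register `p` with `c` is decided by a
straight-line test which writes only to registers from `b` on. -/
theorem exists_test_const {c : A.U} (h : singSet A c ∈ SDEC A) (p b : ℕ) (hpb : p < b) :
    ∃ code : List (SL A), (∀ r ∈ writes code, b ≤ r) ∧
      ∀ R : ℕ → A.U, Passes code R ↔ R p = c := by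
  obtain ⟨M, hM, hx⟩ := h
  have hin : ∀ u : A.U, inputConfig A (singTup A u) = ⟨0, fun _ => 1, fun _ => u⟩ := by
    intro u
    simp only [inputConfig, singTup, Config.mk.injEq, true_and]
    refine ⟨by funext j; simp, ?_⟩
    funext j
    cases j <;> simp
  have hx' : ∀ u : A.U, u = c ↔ HaltsFrom M ⟨0, fun _ => 1, fun _ => u⟩ := by
    intro u
    rw [← hin, ← hx]
    simp [singSet, singTup]
  obtain ⟨d, hr, hd⟩ := (hx' c).1 rfl
  obtain ⟨code, hw, hc⟩ := exists_test hM hr hd (fun _ => p) b (fun _ => hpb)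
  refine ⟨code, hw, fun R => ⟨fun hp => (hx' (R p)).2 ((hc R).2 hp), fun e => (hc R).1 ?_⟩⟩
  funext j
  simp [e]

/-- If the identity is semi-decidable, then equality with the constant `c` in register `1` is
decided on register `0` by a straight-line test. -/
theorem exists_test_id (h : idSet A ∈ SDEC A) (c : A.U) :
    ∃ code : List (SL A), ∀ R : ℕ → A.U, R 1 = c → (Passes code R ↔ R 0 = c) := by
  obtain ⟨M, hM, hx⟩ := h
  -- The input `(c, u)` is `c` in register `0` and `u` in all others: exchange the two.
  let ρ : ℕ → ℕ := fun j => if j = 0 then 1 else 0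
  have hin : ∀ R : ℕ → A.U, inputConfig A ⟨[R 1, R 0], by simp⟩ =
      ⟨0, fun j => if j = 1 then 2 else 1, R ∘ ρ⟩ := by
    intro R
    simp only [inputConfig, Config.mk.injEq, true_and]
    refine ⟨by funext j; simp, ?_⟩
    funext j
    rcases j with _ | _ | j <;> simp [ρ]
  have hx' : ∀ R : ℕ → A.U, R 1 = R 0 ↔
      HaltsFrom M ⟨0, fun j => if j = 1 then 2 else 1, R ∘ ρ⟩ := by
    intro R
    rw [← hin, ← hx]
    simp only [idSet, Set.mem_ofPred_eq, List.cons.injEq, and_true]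
    constructor
    · intro e; exact ⟨R 1, rfl, e.symm⟩
    · rintro ⟨y, e1, e2⟩; rw [e1, e2]
  obtain ⟨d, hr, hd⟩ := (hx' (fun _ => c)).1 rfl
  obtain ⟨code, -, hc⟩ := exists_test hM hr hd ρ 2 (by intro j; simp only [ρ]; split <;> omega)
  refine ⟨code, fun R h1 => ⟨fun hp => ?_, fun e => (hc R).1 ?_⟩⟩
  · rw [← h1]
    exact ((hx' R).2 ((hc R).2 hp)).symm
  · funext j
    simp only [comp, ρ]
    split <;> simp [h1, e]

/-! ### From the identity relation to decidability -/

/-- A machine comparing the input length with `2` and then testing `r` on the first two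
components; the label `3` is a trap and the label `4` is the stop label. -/
def idProg (r : A.relIdx) (lt lf ln : ℕ) : Machine A :=
  ⟨[.incIdx 2, .branchIdx 1 2 2 ln, .branchRel r [0, 1] lt lf, .branchIdx 0 0 3 3], ∅⟩

theorem idProg_det (r : A.relIdx) (lt lf ln : ℕ) : (idProg r lt lf ln).Det := by
  intro ins hi
  simp only [idProg, List.mem_cons, List.not_mem_nil, or_false] at hi
  rcases hi with rfl | rfl | rfl | rfl <;> trivial

open scoped Classical in
/-- `lt`, `lf` and `ln` are the labels reached on equal pairs, on unequal pairs, and on tuples of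
any other length. -/
theorem idProg_halts (r : A.relIdx) (hr : ∀ x y : A.U, A.rels r [x, y] ↔ x = y)
    (lt lf ln : ℕ) (ht : lt = 3 ∨ lt = 4) (hf : lf = 3 ∨ lf = 4) (hn : ln = 3 ∨ ln = 4)
    (x : Tup A) :
    HaltsFrom (idProg r lt lf ln) (inputConfig A x) ↔
      (if x ∈ idSet A then lt else if x.1.length = 2 then lf else ln) = 4 := by
  have hD := idProg_det r lt lf ln
  have hend : ∀ (l : ℕ), (l = 3 ∨ l = 4) → ∀ (idx : ℕ → ℕ) (R : ℕ → A.U),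
      HaltsFrom (idProg r lt lf ln) ⟨l, idx, R⟩ ↔ l = 4 := by
    rintro l (rfl | rfl) idx R
    · simpa using not_haltsFrom_trap hD (by simp [idProg])
    · simpa using haltsFrom_of_halted (by simp [idProg])
  rw [haltsFrom_step hD (ins := .incIdx 2) (by simp [idProg, inputConfig]),
    haltsFrom_step hD (ins := .branchIdx 1 2 2 ln) (by simp [idProg, inputConfig, execDet])]
  obtain ⟨l, hl⟩ := x
  match l, hl with
  | [], h => exact (h rfl).elim
  | [a], _ => simp [execDet, inputConfig, idSet, hend _ hn]
  | [a, b], _ =>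
    rw [haltsFrom_step hD (ins := .branchRel r [0, 1] lt lf)
      (by simp [idProg, inputConfig, execDet])]
    by_cases hab : a = b
    · subst hab
      simp [execDet, inputConfig, idSet, hr, hend _ ht]
    · have : ¬ ∃ x, a = x ∧ b = x := by rintro ⟨x, rfl, rfl⟩; exact hab rfl
      simp [execDet, inputConfig, idSet, hr, hend _ hf, hab, this]
  | a :: b :: d :: l, _ => simp [execDet, inputConfig, idSet, hend _ hn]

theorem dec_of_hasIdRel (h : HasIdRel A) : idSet A ∈ DEC A := by
  obtain ⟨r, hr⟩ := h
  refine ⟨⟨idProg r 4 3 3, idProg_det _ _ _ _, fun x => ?_⟩,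
    ⟨idProg r 3 4 4, idProg_det _ _ _ _, fun x => ?_⟩⟩
  · rw [idProg_halts r hr _ _ _ (by simp) (by simp) (by simp)]
    split_ifs <;> simp_all
  · rw [idProg_halts r hr _ _ _ (by simp) (by simp) (by simp), Set.mem_compl_iff]
    split_ifs <;> simp_all

/-! ### Semi-deciding a constant -/

/-- The machine checks that the input has length `1`, loads the constant into register `1`, and
runs the test of `exists_test_id`; the label `1` is a trap. -/
theorem singSet_sdec (h : idSet A ∈ SDEC A) {c : A.U} (hc : HasConst A c) :
    singSet A c ∈ SDEC A := by
  obtain ⟨i, rfl⟩ := hc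
  obtain ⟨code, hcode⟩ := exists_test_id h (A.consts i)
  let M : Machine A := ⟨.branchIdx 1 2 2 1 :: .branchIdx 0 0 1 1 :: .const 1 i ::
    compile 1 3 code, ∅⟩
  have hD : M.Det := by
    intro ins hi
    simp only [M, List.mem_cons] at hi
    rcases hi with rfl | rfl | rfl | hi
    · trivial
    · trivial
    · trivial
    · exact compile_det _ _ _ _ hi
  obtain ⟨h0, hat⟩ := At.cons (at_self M)
  obtain ⟨h1, hat⟩ := At.cons hat
  obtain ⟨h2, hat⟩ := At.cons hat
  have htrap : ∀ idx R, ¬ HaltsFrom M ⟨1, idx, R⟩ := fun idx R => not_haltsFrom_trap hD h1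
  refine ⟨M, hD, fun x => ?_⟩
  rw [haltsFrom_step hD (c := inputConfig A x) h0]
  obtain ⟨l, hl⟩ := x
  match l, hl with
  | [], h => exact (h rfl).elim
  | [a], _ =>
    have e1 : execDet (.branchIdx 1 2 2 1) (inputConfig A ⟨[a], by simp⟩) =
        ⟨2, fun _ => 1, fun _ => a⟩ := by
      simp only [inputConfig, execDet, Config.mk.injEq]
      refine ⟨by simp, by funext j; simp, ?_⟩
      funext j
      cases j <;> simp
    rw [e1, haltsFrom_step hD h2]
    obtain ⟨R', -, hR⟩ := haltsFrom_compile hD code 3 hat (fun _ => 1)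
      (update (fun _ => a) 1 (A.consts i))
    have e2 := hcode (update (fun _ => a) 1 (A.consts i)) (by simp)
    simp only [execDet]
    rw [hR]
    simp only [singSet, Set.mem_ofPred_eq, List.cons.injEq, and_true]
    by_cases ha : a = A.consts i
    · simp only [ha, true_iff]
      rw [if_pos]
      · exact haltsFrom_of_halted (by simp [M]; omega)
      · rw [← ha, ha]; rw [ha] at e2; rw [e2]; simp
    · simp only [ha, false_iff]
      rw [if_neg]
      · exact htrap _ _
      · rw [e2]; simpa using ha
  | a :: b :: l, _ =>
    simp only [execDet, inputConfig, singSet]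
    simpa using htrap _ _

/-! ### Semi-deciding all digital tuples -/

/-- Code, placed at label `s`, trying the test `f` and, if it fails, the test `g`; if both fail,
it continues at the label `e`, otherwise behind the block. -/
def disj (e s : ℕ) (f g : List (SL A)) : List (Instr A) :=
  compile (s + f.length + 1) s f ++
    .branchIdx 0 0 (s + f.length + 1 + g.length) (s + f.length + 1 + g.length) ::
    compile e (s + f.length + 1) g

@[simp] theorem length_disj (e s : ℕ) (f g : List (SL A)) :
    (disj e s f g).length = f.length + 1 + g.length := by
  simp [disj]; omega

theorem disj_det (e s : ℕ) (f g : List (SL A)) : ∀ ins ∈ disj e s f g, ins.isDet := by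
  intro ins hi
  simp only [disj, List.mem_append, List.mem_cons] at hi
  rcases hi with hi | rfl | hi
  · exact compile_det _ _ _ _ hi
  · trivial
  · exact compile_det _ _ _ _ hi

open scoped Classical in
/-- Since `f` leaves register `p` intact, `g` still sees the original value when it runs after a
failure of `f`. -/
theorem haltsFrom_disj {M : Machine A} (hM : M.Det) {e s p lo hi : ℕ} {f g : List (SL A)}
    (hat : At M s (disj e s f g)) {c₁ c₂ : A.U} (hp : p < lo)
    (hf : ∀ R, Passes f R ↔ R p = c₁) (hg : ∀ R, Passes g R ↔ R p = c₂)
    (hwf : ∀ r ∈ writes f, lo ≤ r ∧ r < hi) (hwg : ∀ r ∈ writes g, lo ≤ r ∧ r < hi)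
    (idx : ℕ → ℕ) (R : ℕ → A.U) :
    ∃ R' : ℕ → A.U, (∀ j, (j < lo ∨ hi ≤ j) → R' j = R j) ∧
      (HaltsFrom M ⟨s, idx, R⟩ ↔ HaltsFrom M
        ⟨if R p = c₁ ∨ R p = c₂ then s + (f.length + 1 + g.length) else e, idx, R'⟩) := by
  obtain ⟨hatf, hat⟩ := At.append hat
  rw [length_compile] at hat
  obtain ⟨hj, hatg⟩ := At.cons hat
  obtain ⟨R₁, hR₁, h₁⟩ := haltsFrom_compile hM f s hatf idx R
  have hk₁ : ∀ j, (j < lo ∨ hi ≤ j) → R₁ j = R j := fun j hj => hR₁ j fun hm => by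
    have := hwf j hm; omega
  by_cases hc : R p = c₁
  · refine ⟨R₁, hk₁, ?_⟩
    rw [h₁, if_pos ((hf R).2 hc), if_pos (Or.inl hc), haltsFrom_step hM hj]
    simp only [execDet, if_true]
    rw [show s + f.length + 1 + g.length = s + (f.length + 1 + g.length) by omega]
  · obtain ⟨R₂, hR₂, h₂⟩ := haltsFrom_compile hM g _ hatg idx R₁
    refine ⟨R₂, fun j hj => ?_, ?_⟩
    · rw [hR₂ j fun hm => by have := hwg j hm; omega, hk₁ j hj]
    · rw [h₁, if_neg (fun h => hc ((hf R).1 h)), h₂]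
      have : Passes g R₁ ↔ R p = c₁ ∨ R p = c₂ := by
        rw [hg, hk₁ p (Or.inl hp)]; simp [hc]
      simp only [this]
      rw [show s + f.length + 1 + g.length = s + (f.length + 1 + g.length) by omega]

/-- With `n` the input length and `N = n + W`, the machine copies the registers `1, …, N - 1` to
`N, …, 2N - 2`, applies the tests `f₀`, `g₀` to register `0`, and then brings each of the copies
to register `1` in order to apply `f₁`, `g₁`. The label `W + 6` is a trap. -/
def digitalProg (W : ℕ) (f₀ g₀ f₁ g₁ : List (SL A)) : Machine A :=
  let s := W + 7 + (f₀.length + 1 + g₀.length)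
  let t := s + 1 + (f₁.length + 1 + g₁.length)
  ⟨List.replicate W (.incIdx 1) ++ ([.incIdx 2, .branchIdx 1 2 (W + 2) W,
      .copy 2 3, .incIdx 2, .incIdx 3, .branchIdx 3 1 (W + 7) (W + 2),
      .branchIdx 0 0 (W + 6) (W + 6)] ++
    (disj (W + 6) (W + 7) f₀ g₀ ++ (.copy 4 3 :: (disj (W + 6) (s + 1) f₁ g₁ ++
      [.incIdx 3, .branchIdx 3 2 (t + 2) s])))), ∅⟩

theorem digitalProg_det (W : ℕ) (f₀ g₀ f₁ g₁ : List (SL A)) :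
    (digitalProg W f₀ g₀ f₁ g₁).Det := by
  intro ins hi
  simp only [digitalProg, List.mem_append, List.mem_cons, List.mem_replicate, List.not_mem_nil,
    or_false] at hi
  rcases hi with ⟨-, rfl⟩ | ((rfl | rfl | rfl | rfl | rfl | rfl | rfl) | hi | rfl | hi | rfl | rfl)
  all_goals first | trivial | exact disj_det _ _ _ _ _ hi

theorem haltsFrom_incs {M : Machine A} (hM : M.Det) (W s : ℕ)
    (hat : At M s (List.replicate W (.incIdx 1))) (idx : ℕ → ℕ) (R : ℕ → A.U) :
    HaltsFrom M ⟨s, idx, R⟩ ↔ HaltsFrom M ⟨s + W, update idx 1 (idx 1 + W), R⟩ := by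
  induction W generalizing s idx with
  | zero => simp
  | succ W ih =>
    obtain ⟨h0, h1⟩ := At.cons hat
    rw [haltsFrom_step hM h0]
    simp only [execDet]
    rw [ih (s + 1) h1]
    simp [Nat.add_assoc, Nat.add_comm 1]

/-- The loop raising index register `2` to the value of index register `1`. -/
theorem haltsFrom_raise {M : Machine A} (hM : M.Det) {s : ℕ}
    (h0 : M.prog[s]? = some (.incIdx 2)) (h1 : M.prog[s + 1]? = some (.branchIdx 1 2 (s + 2) s))
    (R : ℕ → A.U) (k : ℕ) (idx : ℕ → ℕ) (hk : idx 1 = idx 2 + k + 1) :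
    HaltsFrom M ⟨s, idx, R⟩ ↔ HaltsFrom M ⟨s + 2, update idx 2 (idx 1), R⟩ := by
  induction k generalizing idx with
  | zero =>
    rw [haltsFrom_step hM h0]
    simp only [execDet]
    rw [haltsFrom_step hM h1]
    simp [execDet, hk]
  | succ k ih =>
    rw [haltsFrom_step hM h0]
    simp only [execDet]
    rw [haltsFrom_step hM h1]
    simp only [execDet]
    rw [if_neg (by simp; omega), ih _ (by simp; omega)]
    simp

/-- The loop copying a block of registers: the index registers `3` and `2` point to source and
destination, and the copied registers end below the bound in index register `1`. -/
theorem haltsFrom_move {M : Machine A} (hM : M.Det) {s e : ℕ}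
    (h0 : M.prog[s]? = some (.copy 2 3)) (h1 : M.prog[s + 1]? = some (.incIdx 2))
    (h2 : M.prog[s + 2]? = some (.incIdx 3)) (h3 : M.prog[s + 3]? = some (.branchIdx 3 1 e s))
    (k : ℕ) (idx : ℕ → ℕ) (R : ℕ → A.U) (hk : idx 1 = idx 3 + k + 1) (hd : idx 1 ≤ idx 2) :
    ∃ (idx' : ℕ → ℕ) (R' : ℕ → A.U), idx' 3 = idx 1 ∧ idx' 2 = idx 2 + k + 1 ∧
      idx' 4 = idx 4 ∧ (∀ j < idx 2, R' j = R j) ∧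
      (∀ t ≤ k, R' (idx 2 + t) = R (idx 3 + t)) ∧
      (HaltsFrom M ⟨s, idx, R⟩ ↔ HaltsFrom M ⟨e, idx', R'⟩) := by
  have hround : ∀ (idx : ℕ → ℕ) (R : ℕ → A.U), HaltsFrom M ⟨s, idx, R⟩ ↔ HaltsFrom M
      ⟨if idx 3 + 1 = idx 1 then e else s, update (update idx 2 (idx 2 + 1)) 3 (idx 3 + 1),
        update R (idx 2) (R (idx 3))⟩ := by
    intro idx R
    rw [haltsFrom_step hM h0]
    simp only [execDet]
    rw [haltsFrom_step hM h1]
    simp only [execDet]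
    rw [haltsFrom_step hM h2]
    simp only [execDet]
    rw [haltsFrom_step hM h3]
    simp [execDet]
  induction k generalizing idx R with
  | zero =>
    have hrun := hround idx R
    refine ⟨_, _, ?_, ?_, ?_, ?_, ?_, hrun.trans (by rw [if_pos (by omega)])⟩
    · simp; omega
    · simp
    · simp
    · intro j hj; rw [update_of_ne hj.ne]
    · intro t ht
      obtain rfl : t = 0 := by omega
      simp
  | succ k ih =>
    have hrun := hround idx R
    rw [if_neg (by omega)] at hrun
    obtain ⟨idx', R', a1, a2, a3, a4, a5, a6⟩ := ih
      (update (update idx 2 (idx 2 + 1)) 3 (idx 3 + 1)) (update R (idx 2) (R (idx 3)))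
      (by simp; omega) (by simp; omega)
    simp at a1 a2 a3 a4 a5
    refine ⟨idx', R', a1, by omega, a3, ?_, ?_, hrun.trans a6⟩
    · intro j hj
      rw [a4 j (by omega), update_of_ne hj.ne]
    · intro t ht
      rcases t with _ | t
      · rw [a4 _ (by omega)]; simp
      · have := a5 t (by omega)
        rw [show idx 2 + (t + 1) = idx 2 + 1 + t by omega, this, update_of_ne (by omega)]
        congr 1; omega

/-- The loop testing the registers addressed by index register `3`, up to index register `2`. -/
theorem haltsFrom_scan {M : Machine A} (hM : M.Det) {s e hi : ℕ} {f g : List (SL A)}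
    {c₁ c₂ : A.U} (h0 : M.prog[s]? = some (.copy 4 3))
    (hat : At M (s + 1) (disj e (s + 1) f g))
    (h1 : M.prog[s + 1 + (f.length + 1 + g.length)]? = some (.incIdx 3))
    (h2 : M.prog[s + 1 + (f.length + 1 + g.length) + 1]? =
      some (.branchIdx 3 2 (s + 1 + (f.length + 1 + g.length) + 2) s))
    (hend : M.prog.length ≤ s + 1 + (f.length + 1 + g.length) + 2)
    (he : ∀ idx R, ¬ HaltsFrom M ⟨e, idx, R⟩)
    (hf : ∀ R, Passes f R ↔ R 1 = c₁) (hg : ∀ R, Passes g R ↔ R 1 = c₂)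
    (hwf : ∀ r ∈ writes f, 2 ≤ r ∧ r < hi) (hwg : ∀ r ∈ writes g, 2 ≤ r ∧ r < hi)
    (k : ℕ) (idx : ℕ → ℕ) (R : ℕ → A.U) (hk : idx 2 = idx 3 + k + 1) (h4 : idx 4 = 1)
    (hhi : hi ≤ idx 3) (h13 : 1 < idx 3) :
    HaltsFrom M ⟨s, idx, R⟩ ↔ ∀ t ≤ k, R (idx 3 + t) = c₁ ∨ R (idx 3 + t) = c₂ := by
  induction k generalizing idx R with
  | zero =>
    rw [haltsFrom_step hM h0]
    simp only [execDet, h4]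
    obtain ⟨R', hR', hh⟩ := haltsFrom_disj hM hat (by omega) hf hg hwf hwg idx
      (update R 1 (R (idx 3)))
    rw [hh, update_self]
    by_cases hc : R (idx 3) = c₁ ∨ R (idx 3) = c₂
    · rw [if_pos hc, haltsFrom_step hM h1]
      simp only [execDet]
      rw [haltsFrom_step hM h2]
      simp only [execDet]
      rw [if_pos (by simp; omega)]
      have := haltsFrom_of_halted (M := M)
        (c := ⟨s + 1 + (f.length + 1 + g.length) + 2, update idx 3 (idx 3 + 1), R'⟩) hend
      simpa [this] using hc
    · rw [if_neg hc]
      simpa [he] using not_or.1 hc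
  | succ k ih =>
    rw [haltsFrom_step hM h0]
    simp only [execDet, h4]
    obtain ⟨R', hR', hh⟩ := haltsFrom_disj hM hat (by omega) hf hg hwf hwg idx
      (update R 1 (R (idx 3)))
    rw [hh, update_self]
    by_cases hc : R (idx 3) = c₁ ∨ R (idx 3) = c₂
    · rw [if_pos hc, haltsFrom_step hM h1]
      simp only [execDet]
      rw [haltsFrom_step hM h2]
      simp only [execDet]
      rw [if_neg (by simp; omega),
        ih _ _ (by simp; omega) (by simpa using h4) (by simp; omega) (by simp; omega)]
      · simp only [update_self]
        have hR : ∀ t, R' (idx 3 + 1 + t) = R (idx 3 + (t + 1)) := fun t => by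
          rw [hR' _ (by omega), update_of_ne (by omega)]
          congr 1; omega
        simp only [hR]
        constructor
        · rintro h (_ | t) ht
          · exact hc
          · exact h t (by omega)
        · intro h t ht
          exact h (t + 1) (by omega)
    · rw [if_neg hc]
      simp only [he, false_iff]
      intro h
      exact hc (h 0 (by omega))

theorem binTups_sdec {c₁ c₂ : A.U} (h₁ : singSet A c₁ ∈ SDEC A) (h₂ : singSet A c₂ ∈ SDEC A) :
    binTups A c₁ c₂ ∈ SDEC A := by
  obtain ⟨f₀, wf₀, hf₀⟩ := exists_test_const h₁ 0 2 (by omega)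
  obtain ⟨g₀, wg₀, hg₀⟩ := exists_test_const h₂ 0 2 (by omega)
  obtain ⟨f₁, wf₁, hf₁⟩ := exists_test_const h₁ 1 2 (by omega)
  obtain ⟨g₁, wg₁, hg₁⟩ := exists_test_const h₂ 1 2 (by omega)
  -- `W` bounds the registers used by the four tests.
  obtain ⟨W, hW1, hW⟩ : ∃ W, 1 ≤ W ∧ ∀ r ∈ writes f₀ ++ writes g₀ ++ writes f₁ ++ writes g₁,
      r < W := by
    refine ⟨(writes f₀ ++ writes g₀ ++ writes f₁ ++ writes g₁).sum + 1, by omega, ?_⟩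
    intro r hr
    have := List.le_sum_of_mem hr
    omega
  simp only [List.mem_append] at hW
  set M := digitalProg W f₀ g₀ f₁ g₁ with hMdef
  have hD : M.Det := digitalProg_det _ _ _ _ _
  have hat : At M 0 M.prog := at_self M
  have hlen : M.prog.length = W + 7 + (f₀.length + 1 + g₀.length) + 1 +
      (f₁.length + 1 + g₁.length) + 2 := by
    simp [hMdef, digitalProg]; omega
  obtain ⟨hinc, hat⟩ := At.append hat
  rw [List.length_replicate, Nat.zero_add] at hat
  obtain ⟨hl, hat⟩ := At.append hat
  change At M (W + 7) _ at hat
  obtain ⟨l0, hl⟩ := At.cons hl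
  obtain ⟨l1, hl⟩ := At.cons hl
  obtain ⟨l2, hl⟩ := At.cons hl
  obtain ⟨l3, hl⟩ := At.cons hl
  obtain ⟨l4, hl⟩ := At.cons hl
  obtain ⟨l5, hl⟩ := At.cons hl
  obtain ⟨l6, -⟩ := At.cons hl
  obtain ⟨hd₀, hat⟩ := At.append hat
  rw [length_disj] at hat
  obtain ⟨hcp, hat⟩ := At.cons hat
  obtain ⟨hd₁, hat⟩ := At.append hat
  rw [length_disj] at hat
  obtain ⟨k0, hat⟩ := At.cons hat
  obtain ⟨k1, -⟩ := At.cons hat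
  have htrap : ∀ idx R, ¬ HaltsFrom M ⟨W + 6, idx, R⟩ := fun idx R => not_haltsFrom_trap hD l6
  refine ⟨M, hD, fun x => ?_⟩
  obtain ⟨n, hn⟩ : ∃ n, x.1.length = n + 1 :=
    Nat.exists_eq_succ_of_ne_zero (by simpa using x.2)
  set R₀ := (inputConfig A x).reg with hR₀
  have e0 : inputConfig A x = ⟨0, (inputConfig A x).idx, R₀⟩ := rfl
  rw [e0, haltsFrom_incs hD W 0 hinc, Nat.zero_add,
    haltsFrom_raise hD l0 l1 R₀ (n + W - 1) _ (by simp [inputConfig, hn]; omega)]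
  obtain ⟨idx', R', a1, a2, a3, a4, a5, a6⟩ := haltsFrom_move hD l2 l3 l4 l5 (n + W - 1)
    (update (update (inputConfig A x).idx 1 ((inputConfig A x).idx 1 + W)) 2
      (update (inputConfig A x).idx 1 ((inputConfig A x).idx 1 + W) 1)) R₀
    (by simp [inputConfig, hn]; omega) (by simp)
  rw [a6]
  simp [inputConfig, hn] at a1 a2 a3 a4 a5
  obtain ⟨R'', hR'', hh⟩ := haltsFrom_disj hD hd₀ (p := 0) (lo := 2) (hi := W) (by omega) hf₀ hg₀
    (fun r hr => ⟨wf₀ r hr, hW r (by simp [hr])⟩) (fun r hr => ⟨wg₀ r hr, hW r (by simp [hr])⟩)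
    idx' R'
  have hreg : ∀ j, ∃ u ∈ x.1, R₀ j = u := by
    intro j
    refine ⟨_, ?_, rfl⟩
    simp only [hR₀, inputConfig]
    by_cases hj : j < x.1.length
    · rw [List.getD_eq_getElem _ _ hj]; exact List.getElem_mem hj
    · rw [List.getD_eq_default _ _ (by omega)]; exact List.getLast_mem x.2
  -- The positions from `x.1.length` on hold the last component, so testing them too is harmless.
  have hmem : x ∈ binTups A c₁ c₂ ↔ ∀ t ≤ n + W, R₀ t = c₁ ∨ R₀ t = c₂ := by
    constructor
    · intro h t _
      obtain ⟨u, hu, e⟩ := hreg t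
      rw [e]; exact h u hu
    · intro h u hu
      obtain ⟨j, hj, rfl⟩ := List.mem_iff_getElem.1 hu
      have hv : R₀ j = x.1[j] := List.getD_eq_getElem _ _ hj
      rw [← hv]
      exact h j (by omega)
  -- Register `0`, which no copy instruction can read or write, is tested where it is.
  rw [hmem, hh, a4 0 (by omega)]
  by_cases h0 : R₀ 0 = c₁ ∨ R₀ 0 = c₂
  · rw [if_pos h0, haltsFrom_scan hD hcp hd₁ k0 k1 hlen.le htrap hf₁ hg₁
      (fun r hr => ⟨wf₁ r hr, hW r (by simp [hr])⟩) (fun r hr => ⟨wg₁ r hr, hW r (by simp [hr])⟩)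
      (n + W - 1) idx' R'' (by omega) a3 (by omega) (by omega)]
    have hR : ∀ t ≤ n + W - 1, R'' (idx' 3 + t) = R₀ (t + 1) := by
      intro t ht
      rw [hR'' _ (by omega), a1, a5 t ht, Nat.add_comm]
    constructor
    · intro h t ht
      rw [hR t ht]
      exact h _ (by omega)
    · rintro h (_ | t) ht
      · exact h0
      · rw [← hR t (by omega)]
        exact h t (by omega)
  · rw [if_neg h0]
    simp only [htrap, iff_false]
    exact fun h => h0 (h 0 (by omega))

end BSSChain

/-- Proposition: Basic properties — identity and constants.
Let `A ∈ Struc_{c₁,c₂}` and consider the properties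
(a) `A` contains `id_{U_A}` among its relations, (b) `id_{U_A} ∈ DEC_A`,
(c) `id_{U_A} ∈ SDEC_A`, (d) `{c₁}, {c₂} ∈ SDEC_A`,
(e) `{c₁,c₂}^∞ ∈ SDEC_A`.  Then (a) ⇒ (b) ⇒ (c) ⇒ (d) ⇒ (e). -/
theorem identity_and_constants_chain
    (A : FOStruct) (c₁ c₂ : A.U)
    (h₁ : HasConst A c₁) (h₂ : HasConst A c₂) (hne : c₁ ≠ c₂) :
    (HasIdRel A → idSet A ∈ DEC A) ∧
    (idSet A ∈ DEC A → idSet A ∈ SDEC A) ∧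
    (idSet A ∈ SDEC A → singSet A c₁ ∈ SDEC A ∧ singSet A c₂ ∈ SDEC A) ∧
    ((singSet A c₁ ∈ SDEC A ∧ singSet A c₂ ∈ SDEC A) → binTups A c₁ c₂ ∈ SDEC A) := by
  exact ⟨BSSChain.dec_of_hasIdRel, fun h => h.1,
    fun h => ⟨BSSChain.singSet_sdec h h₁, BSSChain.singSet_sdec h h₂⟩,
    fun h => BSSChain.binTups_sdec h.1 h.2⟩
end

section
/- Let 𝒜₂ be the finite structure ({a,b,c,d}; a, b; ; r_a, r_b) of signature (2;;1,1) with four distinct elements, constants a and b, and unary relations r_a = {a} and r_b = {b}. Then {a} ∈ SDEC_{𝒜₂} and {b} ∈ SDEC_{𝒜₂} (indeed χ_{{a}} and χ_{{b}} are computable over 𝒜₂), but the identity relation id on {a,b,c,d} is NOT semi-decidable by any BSS RAM in M_{𝒜₂}: any machine behaves identically on the inputs (d,c) and (c,c), so id ∉ SDEC_{𝒜₂}. Hence property (d) can hold while (c) fails. -/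
/-- The finite structure `(α; k₁, k₂;; r_a, r_b)` of signature `(2;;1,1)`
with constants `k₁, k₂` and the unary relations `r_a = {ra}`, `r_b = {rb}`. -/
def A23 (α : Type) (k₁ k₂ ra rb : α) : FOStruct :=
  { U := α
    constIdx := Fin 2
    consts := fun i => if i = (0 : Fin 2) then k₁ else k₂
    opIdx := Empty
    ops := fun i _ => i.elim
    relIdx := Fin 2
    rels := fun i args => if i = (0 : Fin 2) then args = [ra] else args = [rb] }

/-! ### Runs of deterministic machines -/

theorem nstep_det {A : FOStruct} {M : Machine A} (hM : M.Det) {c c' : Config A} :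
    NStep M c c' ↔ ∃ ins, M.prog[c.label]? = some ins ∧ c' = execDet ins c := by
  unfold NStep
  refine exists_congr fun ins => and_congr_right fun h => ?_
  have hd := hM ins (List.mem_of_getElem? h)
  cases ins <;> simp_all [Instr.isDet]

theorem step_to {A : FOStruct} {M : Machine A} (hM : M.Det) {c : Config A} {ins : Instr A}
    (h : M.prog[c.label]? = some ins) : NStep M c (execDet ins c) :=
  (nstep_det hM).2 ⟨ins, h, rfl⟩

/-- A deterministic machine has at most one reachable halted configuration, hence at most one
output. -/
theorem res_eq {A : FOStruct} {M : Machine A} (hM : M.Det) {c c' : Config A}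
    (hr : Reaches M c c') (hh : Halted M c') : ResFrom M c = {output c'} := by
  have stuck : ∀ {e f : Config A}, Halted M e → Reaches M e f → e = f := by
    intro e f he hf
    rcases Relation.ReflTransGen.cases_head hf with h | ⟨g, h, -⟩
    · exact h
    · obtain ⟨ins, hi, -⟩ := h
      rw [List.getElem?_eq_none he] at hi
      cases hi
  have hu : Relator.RightUnique (NStep M) := by
    intro x y z hy hz
    obtain ⟨i, hi, rfl⟩ := (nstep_det hM).1 hy
    obtain ⟨j, hj, rfl⟩ := (nstep_det hM).1 hz
    rw [hi] at hj
    cases hj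
    rfl
  ext z
  constructor
  · rintro ⟨e, he, hhe, rfl⟩
    rcases Relation.ReflTransGen.total_of_right_unique hu hr he with h | h
    · rw [stuck hh h]; rfl
    · rw [stuck hhe h]; rfl
  · rintro rfl
    exact ⟨c', hr, hh, rfl⟩

/-! ### Similar configurations -/

/-- Two configurations are similar if they agree except that a register value outside `{a, b}`
may be exchanged for another value outside `{a, b}`. -/
def Sim {α : Type} {a b : α} (c c' : Config (A23 α a b a b)) : Prop :=
  c.label = c'.label ∧ c.idx = c'.idx ∧
    ∀ i, (c.reg i = a ↔ c'.reg i = a) ∧ (c.reg i = b ↔ c'.reg i = b)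

theorem Sim.symm {α : Type} {a b : α} {c c' : Config (A23 α a b a b)} (h : Sim c c') :
    Sim c' c :=
  ⟨h.1.symm, h.2.1.symm, fun i => ⟨(h.2.2 i).1.symm, (h.2.2 i).2.symm⟩⟩

theorem map_eq_singleton_congr {β : Type} {f g : ℕ → β} {e : β} (h : ∀ i, f i = e ↔ g i = e)
    (l : List ℕ) : l.map f = [e] ↔ l.map g = [e] := by
  rcases l with _ | ⟨x, _ | ⟨y, l⟩⟩ <;> simp [h]

theorem sim_rel {α : Type} {a b : α} {c c' : Config (A23 α a b a b)} (h : Sim c c')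
    (i : Fin 2) (args : List ℕ) :
    (A23 α a b a b).rels i (args.map c.reg) ↔ (A23 α a b a b).rels i (args.map c'.reg) := by
  by_cases hi : i = 0
  · simpa [A23, hi] using map_eq_singleton_congr (fun j => (h.2.2 j).1) args
  · simpa [A23, hi] using map_eq_singleton_congr (fun j => (h.2.2 j).2) args

theorem sim_step {α : Type} {a b : α} {ins : Instr (A23 α a b a b)} (hd : ins.isDet)
    {c c' : Config (A23 α a b a b)} (h : Sim c c') : Sim (execDet ins c) (execDet ins c') := by
  have hrel := sim_rel h
  obtain ⟨h1, h2, h3⟩ := h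
  cases ins with
  | apply j i args => exact i.elim
  | const j i =>
    refine ⟨by simp [execDet, h1], h2, fun k => ?_⟩
    by_cases hk : k = j
    · subst hk; simp [execDet]
    · simpa [execDet, hk] using h3 k
  | copy j k =>
    refine ⟨by simp [execDet, h1], h2, fun m => ?_⟩
    by_cases hm : m = c'.idx j
    · subst hm; simpa [execDet, h2] using h3 (c'.idx k)
    · simpa [execDet, h2, hm] using h3 m
  | branchRel i args l₁ l₂ =>
    refine ⟨?_, h2, h3⟩
    have hi := hrel i args
    by_cases hr : (A23 α a b a b).rels i (args.map c'.reg)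
    · simp only [execDet, if_pos hr, if_pos (hi.2 hr)]
    · simp only [execDet, if_neg hr, if_neg fun h => hr (hi.1 h)]
  | branchIdx j k l₁ l₂ => exact ⟨by simp [execDet, h2], h2, h3⟩
  | incIdx j => exact ⟨by simp [execDet, h1], by simp [execDet, h2], h3⟩
  | resetIdx j => exact ⟨by simp [execDet, h1], by simp [execDet, h2], h3⟩
  | orGoto l₁ l₂ => exact hd.elim
  | nuGuess j => exact hd.elim

theorem halts_of_sim {α : Type} {a b : α} {M : Machine (A23 α a b a b)} (hM : M.Det)
    {c c' : Config (A23 α a b a b)} (h : Sim c c') (hc : HaltsFrom M c) : HaltsFrom M c' := by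
  obtain ⟨e, he, hh⟩ := hc
  have key : ∃ e', Reaches M c' e' ∧ Sim e e' := by
    clear hh
    induction he with
    | refl => exact ⟨c', .refl, h⟩
    | tail _ hs ih =>
      obtain ⟨f', hf', hsim⟩ := ih
      obtain ⟨ins, hi, rfl⟩ := (nstep_det hM).1 hs
      refine ⟨execDet ins f', hf'.tail (step_to hM ?_),
        sim_step (hM ins (List.mem_of_getElem? hi)) hsim⟩
      rw [← hsim.1, hi]
  obtain ⟨e', he', hsim⟩ := key
  refine ⟨e', he', ?_⟩
  unfold Halted at hh ⊢
  rwa [← hsim.1]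

theorem halts_iff_of_sim {α : Type} {a b : α} {M : Machine (A23 α a b a b)} (hM : M.Det)
    {c c' : Config (A23 α a b a b)} (h : Sim c c') : HaltsFrom M c ↔ HaltsFrom M c' :=
  ⟨halts_of_sim hM h, halts_of_sim hM h.symm⟩

/-! ### Recognizing singletons -/

/-- The program that halts exactly on the inputs of length one satisfying the relation `i`.
Index register `2` holds the value `1`, to which the input length in index register `1` is
compared; each test that fails is repeated forever. -/
def semiM (A : FOStruct) (i : A.relIdx) : Machine A :=
  ⟨[.branchIdx 1 2 1 0, .branchRel i [0] 2 1], ∅⟩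

/-- The program that outputs the constant `k₁` on the inputs of length one satisfying the
relation `i`, and the constant `k₂` on all others. -/
def chiM (A : FOStruct) (i : A.relIdx) (k₁ k₂ : A.constIdx) : Machine A :=
  ⟨[.branchIdx 1 2 1 4, .branchRel i [0] 2 4, .const 0 k₁, .branchIdx 1 1 6 6,
    .const 0 k₂, .resetIdx 1], ∅⟩

theorem semiM_det (A : FOStruct) (i : A.relIdx) : (semiM A i).Det := by
  simp [Machine.Det, semiM, Instr.isDet]

theorem chiM_det (A : FOStruct) (i : A.relIdx) (k₁ k₂ : A.constIdx) :
    (chiM A i k₁ k₂).Det := by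
  simp [Machine.Det, chiM, Instr.isDet]

theorem mem_singSet_iff {A : FOStruct} (e : A.U) (x : Tup A) :
    x ∈ singSet A e ↔ x.1.length = 1 ∧ (inputConfig A x).reg 0 = e := by
  obtain ⟨l, hl⟩ := x
  rcases l with _ | ⟨y, _ | ⟨z, l⟩⟩
  · exact absurd rfl hl
  · simp [singSet, inputConfig]
  · simp [singSet]

theorem singSet_mem_SDEC {A : FOStruct} (i : A.relIdx) (e : A.U)
    (h : ∀ u, A.rels i [u] ↔ u = e) : singSet A e ∈ SDEC A := by
  refine ⟨semiM A i, semiM_det A i, fun x => ?_⟩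
  rw [mem_singSet_iff]
  constructor
  · rintro ⟨hl, hr⟩
    refine ⟨{ inputConfig A x with label := 2 }, ?_, by simp [Halted, semiM]⟩
    refine (Relation.ReflTransGen.single (b := { inputConfig A x with label := 1 }) ?_).tail ?_
    · refine (nstep_det (semiM_det A i)).2 ⟨.branchIdx 1 2 1 0, rfl, ?_⟩
      simp [execDet, inputConfig, hl]
    · refine (nstep_det (semiM_det A i)).2 ⟨.branchRel i [0] 2 1, rfl, ?_⟩
      simp [execDet, h, hr]
  · rintro ⟨c', hc, hh⟩
    -- The labels `1` and `2` record which of the two tests have succeeded.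
    have inv : c'.idx = (inputConfig A x).idx ∧ c'.reg = (inputConfig A x).reg ∧
        (c'.label = 0 ∨ c'.label = 1 ∧ x.1.length = 1 ∨
          c'.label = 2 ∧ x.1.length = 1 ∧ (inputConfig A x).reg 0 = e) := by
      clear hh
      induction hc with
      | refl => exact ⟨rfl, rfl, Or.inl rfl⟩
      | tail _ hs ih =>
        obtain ⟨ins, hi, rfl⟩ := (nstep_det (semiM_det A i)).1 hs
        obtain ⟨h1, h2, h3 | ⟨h3, h4⟩ | ⟨h3, -⟩⟩ := ih
        · obtain rfl : Instr.branchIdx 1 2 1 0 = ins := by simpa [semiM, h3] using hi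
          refine ⟨h1, h2, ?_⟩
          by_cases hl : x.1.length = 1 <;> simp [execDet, h1, inputConfig, hl]
        · obtain rfl : Instr.branchRel i [0] 2 1 = ins := by simpa [semiM, h3] using hi
          refine ⟨h1, h2, ?_⟩
          by_cases hr : (inputConfig A x).reg 0 = e <;> simp [execDet, h2, h, hr, h4]
        · simp [semiM, h3] at hi
    obtain ⟨-, -, h3 | ⟨h3, -⟩ | ⟨-, h3⟩⟩ := inv
    · simp [Halted, semiM, h3] at hh
    · simp [Halted, semiM, h3] at hh
    · exact h3

theorem chi_computable {A : FOStruct} (i : A.relIdx) (k₁ k₂ : A.constIdx) (e : A.U)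
    (h : ∀ u, A.rels i [u] ↔ u = e) :
    ComputesFn A (chiM A i k₁ k₂) (chi A (A.consts k₁) (A.consts k₂) (singSet A e)) := by
  have hM := chiM_det A i k₁ k₂
  refine ⟨hM, fun x => ?_⟩
  -- Every configuration at label `4` leads to the output `k₂`.
  have reject : ∀ c : Config A, c.label = 4 → Reaches (chiM A i k₁ k₂) (inputConfig A x) c →
      Res (chiM A i k₁ k₂) x = {singTup A (A.consts k₂)} := by
    intro c hc hr
    have s1 := step_to hM (c := c) (ins := .const 0 k₂) (by rw [hc]; rfl)
    have s2 := step_to hM (c := execDet (.const 0 k₂) c) (ins := .resetIdx 1)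
      (by simp [execDet, hc, chiM])
    refine (res_eq hM ((hr.tail s1).tail s2) (by simp [Halted, chiM, execDet, hc])).trans ?_
    simp [output, execDet, singTup]
  by_cases hl : x.1.length = 1
  · have s1 : NStep (chiM A i k₁ k₂) (inputConfig A x) { inputConfig A x with label := 1 } :=
      (nstep_det hM).2 ⟨.branchIdx 1 2 1 4, rfl, by simp [execDet, inputConfig, hl]⟩
    by_cases hr : (inputConfig A x).reg 0 = e
    · have s2 : NStep (chiM A i k₁ k₂) { inputConfig A x with label := 1 }
          { inputConfig A x with label := 2 } :=
        (nstep_det hM).2 ⟨.branchRel i [0] 2 4, rfl, by simp [execDet, h, hr]⟩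
      have s3 := step_to hM (c := { inputConfig A x with label := 2 }) (ins := .const 0 k₁) rfl
      have s4 := step_to hM (c := execDet (.const 0 k₁) { inputConfig A x with label := 2 })
        (ins := .branchIdx 1 1 6 6) rfl
      rw [chi, if_pos ((mem_singSet_iff e x).2 ⟨hl, hr⟩)]
      refine (res_eq hM ((((Relation.ReflTransGen.single s1).tail s2).tail s3).tail s4)
        (by simp [Halted, chiM, execDet])).trans ?_
      simp [output, execDet, singTup, inputConfig, hl]
    · rw [chi, if_neg fun hx => hr ((mem_singSet_iff e x).1 hx).2]
      refine reject { inputConfig A x with label := 4 } rfl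
        ((Relation.ReflTransGen.single s1).tail ?_)
      exact (nstep_det hM).2 ⟨.branchRel i [0] 2 4, rfl, by simp [execDet, h, hr]⟩
  · rw [chi, if_neg fun hx => hl ((mem_singSet_iff e x).1 hx).1]
    refine reject { inputConfig A x with label := 4 } rfl (Relation.ReflTransGen.single ?_)
    exact (nstep_det hM).2 ⟨.branchIdx 1 2 1 4, rfl, by simp [execDet, inputConfig, hl]⟩

/-- Example: a structure with (d) in which (c) does not
hold.  For the finite structure `𝒜₂ = ({a,b,c,d}; a, b;; r_a, r_b)` with
four distinct elements, constants `a`, `b`, and `r_a = {a}`, `r_b = {b}`: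
the singletons `{a}` and `{b}` are semi-decidable (indeed `χ_{{a}}` and
`χ_{{b}}` are computable over `𝒜₂`), any deterministic machine behaves
identically on the inputs `(d,c)` and `(c,c)`, and the identity relation is
not semi-decidable by any BSS RAM in `M_{𝒜₂}`.  Hence (d) can hold while (c)
fails. -/
theorem A2_constants_recognizable_but_identity_not_semidecidable
    (α : Type) (a b c d : α)
    (hab : a ≠ b) (hac : a ≠ c) (had : a ≠ d)
    (hbc : b ≠ c) (hbd : b ≠ d) (hcd : c ≠ d)
    (hcover : ∀ x : α, x = a ∨ x = b ∨ x = c ∨ x = d) :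
    singSet (A23 α a b a b) a ∈ SDEC (A23 α a b a b) ∧
    singSet (A23 α a b a b) b ∈ SDEC (A23 α a b a b) ∧
    (∃ M : Machine (A23 α a b a b),
      ComputesFn (A23 α a b a b) M (chi (A23 α a b a b) a b (singSet (A23 α a b a b) a))) ∧
    (∃ M : Machine (A23 α a b a b),
      ComputesFn (A23 α a b a b) M (chi (A23 α a b a b) a b (singSet (A23 α a b a b) b))) ∧
    (∀ M : Machine (A23 α a b a b), M.Det →
      (HaltsFrom M (inputConfig (A23 α a b a b) ⟨[d, c], by simp⟩) ↔
        HaltsFrom M (inputConfig (A23 α a b a b) ⟨[c, c], by simp⟩))) ∧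
    idSet (A23 α a b a b) ∉ SDEC (A23 α a b a b) := by
  have hra : ∀ u : α, (A23 α a b a b).rels (0 : Fin 2) [u] ↔ u = a := by
    intro u; simp [A23]
  have hrb : ∀ u : α, (A23 α a b a b).rels (1 : Fin 2) [u] ↔ u = b := by
    intro u; simp [A23]
  have same : ∀ M : Machine (A23 α a b a b), M.Det →
      (HaltsFrom M (inputConfig (A23 α a b a b) ⟨[d, c], by simp⟩) ↔
        HaltsFrom M (inputConfig (A23 α a b a b) ⟨[c, c], by simp⟩)) := by
    intro M hM
    refine halts_iff_of_sim hM ⟨rfl, rfl, fun i => ?_⟩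
    rcases i with _ | i
    · exact ⟨iff_of_false had.symm hac.symm, iff_of_false hbd.symm hbc.symm⟩
    · exact ⟨Iff.rfl, Iff.rfl⟩
  refine ⟨singSet_mem_SDEC (A := A23 α a b a b) (0 : Fin 2) a hra,
    singSet_mem_SDEC (A := A23 α a b a b) (1 : Fin 2) b hrb,
    ⟨_, chi_computable (A := A23 α a b a b) (0 : Fin 2) (0 : Fin 2) (1 : Fin 2) a hra⟩,
    ⟨_, chi_computable (A := A23 α a b a b) (1 : Fin 2) (0 : Fin 2) (1 : Fin 2) b hrb⟩,
    same, ?_⟩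
  rintro ⟨M, hM, hid⟩
  obtain ⟨x, hx⟩ := (hid _).2 ((same M hM).2 ((hid _).1 ⟨c, rfl⟩))
  have hx' : ([d, c] : List α) = [x, x] := hx
  obtain ⟨h1, h2⟩ := List.cons.inj hx'
  exact hcd ((List.cons.inj h2).1.trans h1.symm)
end

section
/- Let 𝒜₃ be the finite structure ({a,b,c,d}; c, d; ; r_a, r_b) of signature (2;;1,1) with four distinct elements, constants c and d, and unary relations r_a = {a} and r_b = {b}. Then {c,d} ∈ SDEC_{𝒜₃} and its complement is semi-decidable, but {c} is NOT semi-decidable by any BSS RAM in M_{𝒜₃}: any machine behaves identically on the inputs c and d, so {c} ∉ SDEC_{𝒜₃}. Hence property (e) can hold while (d) fails. -/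
/-! ### Deterministic computations -/

section General

variable {A : FOStruct} {M : Machine A}

lemma nstep_iff_of_isDet {c c' : Config A} {ins : Instr A} (hi : ins.isDet)
    (h : M.prog[c.label]? = some ins) : NStep M c c' ↔ c' = execDet ins c := by
  constructor
  · rintro ⟨ins', h', hc⟩
    obtain rfl : ins = ins' := Option.some.inj (h.symm.trans h')
    cases ins <;> first | exact hc | exact hi.elim
  · intro hc
    refine ⟨ins, h, ?_⟩
    cases ins <;> first | exact hc | exact hi.elim

lemma Machine.Det.nstep_iff (hM : M.Det) {c c' : Config A} :
    NStep M c c' ↔ ∃ ins, M.prog[c.label]? = some ins ∧ c' = execDet ins c := by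
  constructor
  · rintro ⟨ins, h, hc⟩
    exact ⟨ins, h, (nstep_iff_of_isDet (hM _ (List.mem_of_getElem? h)) h).1 ⟨ins, h, hc⟩⟩
  · rintro ⟨ins, h, hc⟩
    exact (nstep_iff_of_isDet (hM _ (List.mem_of_getElem? h)) h).2 hc

lemma not_nstep_of_halted {c c' : Config A} (h : Halted M c) : ¬ NStep M c c' := by
  rintro ⟨ins, hins, -⟩
  rw [List.getElem?_eq_none h] at hins
  cases hins

/-- Along a deterministic computation, halting does not depend on the starting point. -/
lemma Machine.Det.haltsFrom_iff (hM : M.Det) {c c' : Config A} (h : Reaches M c c') :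
    HaltsFrom M c ↔ HaltsFrom M c' := by
  constructor
  · rintro ⟨e, he, hh⟩
    have hu : Relator.RightUnique (NStep M) := by
      intro x y z hy hz
      obtain ⟨i, hi, rfl⟩ := hM.nstep_iff.1 hy
      obtain ⟨j, hj, rfl⟩ := hM.nstep_iff.1 hz
      rw [Option.some.inj (hi.symm.trans hj)]
    rcases Relation.ReflTransGen.total_of_right_unique hu h he with h1 | h1
    · exact ⟨e, h1, hh⟩
    · have hno := fun f => not_nstep_of_halted (c' := f) hh
      -- No configuration other than `e` itself is reachable from the halted `e`.
      rcases Relation.ReflTransGen.cases_head h1 with rfl | ⟨f, hf, -⟩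
      · exact ⟨e, .refl, hh⟩
      · exact (hno f hf).elim
  · rintro ⟨e, he, hh⟩
    exact ⟨e, h.trans he, hh⟩

end General

/-! ### Deciding `{c,d}^∞` -/

section Scan

variable {α : Type} {k₁ k₂ a b : α}

/-- The scanning program: jump to `g` if no input component is `a` or `b`, and to `e` otherwise.
Register `0` cannot be addressed indirectly, since index registers are at least `1`, so it is tested
separately first. Index register `3` runs from `1` to `n`, the value of index register `1`;
register `n` lies just past the input and repeats its last component. Label `6` is an infinite
loop, and `9` is the stop label. -/
def scan (α : Type) (k₁ k₂ a b : α) (g e : ℕ) : Machine (A23 α k₁ k₂ a b) where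
  prog :=
    [ .branchRel (0 : Fin 2) [0] e 1,
      .branchRel (1 : Fin 2) [0] e 2,
      .copy 2 3,
      .branchRel (0 : Fin 2) [1] e 4,
      .branchRel (1 : Fin 2) [1] e 5,
      .branchIdx 3 1 g 7,
      .branchIdx 1 1 6 6,
      .incIdx 3,
      .branchIdx 1 1 2 2 ]
  oracle := ∅

lemma scan_det (g e : ℕ) : (scan α k₁ k₂ a b g e).Det := by
  intro ins h
  simp only [scan, List.mem_cons, List.not_mem_nil, or_false] at h
  rcases h with rfl | rfl | rfl | rfl | rfl | rfl | rfl | rfl | rfl <;> trivial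

/-- Prepend one deterministic step to a computation with a prescribed kind of endpoint. -/
lemma reaches_step {A : FOStruct} {M : Machine A} {c : Config A} {p : Config A → Prop}
    (ins : Instr A) (hi : ins.isDet) (h : M.prog[c.label]? = some ins)
    (hr : ∃ c', Reaches M (execDet ins c) c' ∧ p c') : ∃ c', Reaches M c c' ∧ p c' := by
  obtain ⟨c', h1, h2⟩ := hr
  exact ⟨c', .head ((nstep_iff_of_isDet hi h).2 rfl) h1, h2⟩

lemma branch_a {M : Machine (A23 α k₁ k₂ a b)} {p : Config (A23 α k₁ k₂ a b) → Prop}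
    {l r l₁ l₂ : ℕ} {idx : ℕ → ℕ} {reg : ℕ → α}
    (h : M.prog[l]? = some (.branchRel (0 : Fin 2) [r] l₁ l₂))
    (hy : reg r = a → ∃ c', Reaches M ⟨l₁, idx, reg⟩ c' ∧ p c')
    (hn : reg r ≠ a → ∃ c', Reaches M ⟨l₂, idx, reg⟩ c' ∧ p c') :
    ∃ c', Reaches M ⟨l, idx, reg⟩ c' ∧ p c' := by
  refine reaches_step (.branchRel (0 : Fin 2) [r] l₁ l₂) trivial h ?_
  have hrel : (A23 α k₁ k₂ a b).rels (0 : Fin 2) ([r].map reg) ↔ reg r = a := by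
    show (if (0 : Fin 2) = 0 then [reg r] = [a] else [reg r] = [b]) ↔ _
    simp
  by_cases hr : reg r = a
  · convert hy hr using 4
    exact congrArg (Config.mk (A := A23 α k₁ k₂ a b) · idx reg) (if_pos (hrel.2 hr))
  · convert hn hr using 4
    exact congrArg (Config.mk (A := A23 α k₁ k₂ a b) · idx reg) (if_neg (hr ∘ hrel.1))

lemma branch_b {M : Machine (A23 α k₁ k₂ a b)} {p : Config (A23 α k₁ k₂ a b) → Prop}
    {l r l₁ l₂ : ℕ} {idx : ℕ → ℕ} {reg : ℕ → α}
    (h : M.prog[l]? = some (.branchRel (1 : Fin 2) [r] l₁ l₂))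
    (hy : reg r = b → ∃ c', Reaches M ⟨l₁, idx, reg⟩ c' ∧ p c')
    (hn : reg r ≠ b → ∃ c', Reaches M ⟨l₂, idx, reg⟩ c' ∧ p c') :
    ∃ c', Reaches M ⟨l, idx, reg⟩ c' ∧ p c' := by
  refine reaches_step (.branchRel (1 : Fin 2) [r] l₁ l₂) trivial h ?_
  have hrel : (A23 α k₁ k₂ a b).rels (1 : Fin 2) ([r].map reg) ↔ reg r = b := by
    show (if (1 : Fin 2) = 0 then [reg r] = [a] else [reg r] = [b]) ↔ _
    simp
  by_cases hr : reg r = b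
  · convert hy hr using 4
    exact congrArg (Config.mk (A := A23 α k₁ k₂ a b) · idx reg) (if_pos (hrel.2 hr))
  · convert hn hr using 4
    exact congrArg (Config.mk (A := A23 α k₁ k₂ a b) · idx reg) (if_neg (hr ∘ hrel.1))

lemma branch_idx {A : FOStruct} {M : Machine A} {p : Config A → Prop}
    {l j k l₁ l₂ : ℕ} {idx : ℕ → ℕ} {reg : ℕ → A.U}
    (h : M.prog[l]? = some (.branchIdx j k l₁ l₂))
    (hy : idx j = idx k → ∃ c', Reaches M ⟨l₁, idx, reg⟩ c' ∧ p c')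
    (hn : idx j ≠ idx k → ∃ c', Reaches M ⟨l₂, idx, reg⟩ c' ∧ p c') :
    ∃ c', Reaches M ⟨l, idx, reg⟩ c' ∧ p c' := by
  refine reaches_step (.branchIdx j k l₁ l₂) trivial h ?_
  by_cases hr : idx j = idx k
  · convert hy hr using 4
    exact congrArg (Config.mk · idx reg) (if_pos hr)
  · convert hn hr using 4
    exact congrArg (Config.mk · idx reg) (if_neg hr)

/-- One pass through the loop, from label `2` to `e`, to `g`, or back to label `2`. -/
lemma scan_body {g e : ℕ} {p : Config (A23 α k₁ k₂ a b) → Prop} {idx : ℕ → ℕ} {reg : ℕ → α}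
    (h2 : idx 2 = 1)
    (hbad : ∀ reg' : ℕ → α, reg (idx 3) = a ∨ reg (idx 3) = b → p ⟨e, idx, reg'⟩)
    (hgood : ∀ reg' : ℕ → α, reg (idx 3) ≠ a ∧ reg (idx 3) ≠ b → idx 3 = idx 1 → p ⟨g, idx, reg'⟩)
    (hnext : reg (idx 3) ≠ a ∧ reg (idx 3) ≠ b → idx 3 ≠ idx 1 →
      ∃ c', Reaches (scan α k₁ k₂ a b g e)
        ⟨2, Function.update idx 3 (idx 3 + 1), Function.update reg 1 (reg (idx 3))⟩ c' ∧ p c') :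
    ∃ c', Reaches (scan α k₁ k₂ a b g e) ⟨2, idx, reg⟩ c' ∧ p c' := by
  refine reaches_step (.copy 2 3) trivial rfl ?_
  show ∃ c', Reaches (scan α k₁ k₂ a b g e)
    ⟨3, idx, (Function.update reg (idx 2) (reg (idx 3)) : ℕ → α)⟩ c' ∧ _
  rw [h2]
  have h1 : Function.update reg 1 (reg (idx 3)) 1 = reg (idx 3) := Function.update_self ..
  refine branch_a rfl (fun ha => ⟨_, .refl, hbad _ (.inl (h1.symm.trans ha))⟩) fun ha => ?_
  refine branch_b rfl (fun hb => ⟨_, .refl, hbad _ (.inr (h1.symm.trans hb))⟩) fun hb => ?_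
  rw [h1] at ha hb
  refine branch_idx rfl (fun h => ⟨_, .refl, hgood _ ⟨ha, hb⟩ h⟩) fun h => ?_
  refine reaches_step (.incIdx 3) trivial rfl ?_
  exact branch_idx rfl (fun _ => hnext ⟨ha, hb⟩ h) fun hne => (hne rfl).elim

/-- Correctness of the loop, by induction on the number `m` of registers still to be scanned after
the current one. Overwriting register `1` is harmless: the loop never looks back. -/
lemma scan_loop (g e : ℕ) (m : ℕ) : ∀ (idx : ℕ → ℕ) (reg : ℕ → α),
    idx 2 = 1 → 1 ≤ idx 3 → idx 1 = idx 3 + m →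
    ∃ c', Reaches (scan α k₁ k₂ a b g e) ⟨2, idx, reg⟩ c' ∧
      (((∀ i, idx 3 ≤ i → i ≤ idx 1 → reg i ≠ a ∧ reg i ≠ b) ∧ c'.label = g) ∨
        ((∃ i, idx 3 ≤ i ∧ i ≤ idx 1 ∧ (reg i = a ∨ reg i = b)) ∧ c'.label = e)) := by
  induction m with
  | zero =>
    intro idx reg h2 h3 h1
    refine scan_body h2 (fun _ h => .inr ⟨⟨_, le_rfl, by omega, h⟩, rfl⟩)
      (fun _ h _ => .inl ⟨fun i hi hi' => ?_, rfl⟩) fun _ h => (h h1.symm).elim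
    obtain rfl : i = idx 3 := by omega
    exact h
  | succ m ih =>
    intro idx reg h2 h3 h1
    refine scan_body h2 (fun _ h => .inr ⟨⟨_, le_rfl, by omega, h⟩, rfl⟩)
      (fun _ _ h => by omega) fun h _ => ?_
    obtain ⟨c', hc', hp⟩ := ih (Function.update idx 3 (idx 3 + 1))
      (Function.update reg 1 (reg (idx 3))) (by simp [h2]) (by simp) (by simp [h1]; omega)
    refine ⟨c', hc', ?_⟩
    have hreg : ∀ i, idx 3 + 1 ≤ i → Function.update reg 1 (reg (idx 3)) i = reg i :=
      fun i hi => Function.update_of_ne (by omega) _ _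
    rw [Function.update_self, Function.update_of_ne (by decide)] at hp
    rcases hp with ⟨hp, hl⟩ | ⟨⟨i, hi, hi', hp⟩, hl⟩
    · refine .inl ⟨fun i hi hi' => ?_, hl⟩
      rcases hi.eq_or_lt with rfl | hlt
      · exact h
      · simpa only [hreg i hlt] using hp i hlt hi'
    · rw [hreg i hi] at hp
      exact .inr ⟨⟨i, by omega, hi', hp⟩, hl⟩

lemma scan_spec (g e : ℕ) (x : Tup (A23 α k₁ k₂ a b)) :
    ∃ c', Reaches (scan α k₁ k₂ a b g e) (inputConfig _ x) c' ∧
      (((∀ u ∈ x.1, u ≠ a ∧ u ≠ b) ∧ c'.label = g) ∨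
        ((∃ u ∈ x.1, u = a ∨ u = b) ∧ c'.label = e)) := by
  obtain ⟨l, hl⟩ := x
  have hpos : 0 < l.length := List.length_pos_iff.2 hl
  have hmem : ∀ i, l.getD i (l.getLast hl) ∈ l := by
    intro i
    by_cases hi : i < l.length
    · simp [List.getD, hi]
    · simp [List.getD, hi]
  refine branch_a rfl (fun ha => ⟨_, .refl, .inr ⟨⟨_, hmem 0, .inl ha⟩, rfl⟩⟩) fun ha => ?_
  refine branch_b rfl (fun hb => ⟨_, .refl, .inr ⟨⟨_, hmem 0, .inr hb⟩, rfl⟩⟩) fun hb => ?_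
  obtain ⟨c', hc', hp⟩ := scan_loop (k₁ := k₁) (k₂ := k₂) (a := a) (b := b) g e (l.length - 1)
    (fun j => if j = 1 then l.length else 1) (fun i => l.getD i (l.getLast hl))
    (by simp) (by simp) (by simp; omega)
  refine ⟨c', hc', hp.imp ?_ ?_⟩
  · rintro ⟨h, hg⟩
    refine ⟨fun u hu => ?_, hg⟩
    obtain ⟨i, hi, rfl⟩ := List.getElem_of_mem hu
    have hi' : l.getD i (l.getLast hl) = l[i] := by simp [List.getD, hi]
    rw [← hi']
    rcases Nat.eq_zero_or_pos i with rfl | hpi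
    · exact ⟨ha, hb⟩
    · exact h i (Nat.succ_le_of_lt hpi) (by simpa using hi.le)
  · rintro ⟨⟨i, -, -, h⟩, he⟩
    exact ⟨⟨_, hmem i, h⟩, he⟩

lemma scan_halts_nine {g e : ℕ} {c : Config (A23 α k₁ k₂ a b)} (h : c.label = 9) :
    HaltsFrom (scan α k₁ k₂ a b g e) c :=
  ⟨c, .refl, by simp [Halted, scan, h]⟩

lemma scan_not_halts_six {g e : ℕ} {c : Config (A23 α k₁ k₂ a b)} (h : c.label = 6) :
    ¬ HaltsFrom (scan α k₁ k₂ a b g e) c := by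
  rintro ⟨c', hr, hh⟩
  have h6 : c'.label = 6 := by
    clear hh
    induction hr with
    | refl => exact h
    | @tail x y _ hs ih =>
      have := (nstep_iff_of_isDet (ins := .branchIdx 1 1 6 6) trivial (by rw [ih]; rfl)).1 hs
      simp [this, execDet]
  simp [Halted, scan, h6] at hh

lemma scan_accepts (x : Tup (A23 α k₁ k₂ a b)) :
    HaltsFrom (scan α k₁ k₂ a b 9 6) (inputConfig _ x) ↔ ∀ u ∈ x.1, u ≠ a ∧ u ≠ b := by
  obtain ⟨c', hr, ⟨h, hl⟩ | ⟨⟨u, hu, h⟩, hl⟩⟩ := scan_spec 9 6 x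
  · exact iff_of_true (((scan_det _ _).haltsFrom_iff hr).2 (scan_halts_nine hl)) h
  · refine iff_of_false (fun hh => scan_not_halts_six hl (((scan_det _ _).haltsFrom_iff hr).1 hh)) ?_
    exact fun hh => h.elim (hh u hu).1 (hh u hu).2

lemma scan_rejects (x : Tup (A23 α k₁ k₂ a b)) :
    HaltsFrom (scan α k₁ k₂ a b 6 9) (inputConfig _ x) ↔ ¬ ∀ u ∈ x.1, u ≠ a ∧ u ≠ b := by
  obtain ⟨c', hr, ⟨h, hl⟩ | ⟨⟨u, hu, h⟩, hl⟩⟩ := scan_spec 6 9 x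
  · exact iff_of_false
      (fun hh => scan_not_halts_six hl (((scan_det _ _).haltsFrom_iff hr).1 hh)) (not_not.2 h)
  · refine iff_of_true (((scan_det _ _).haltsFrom_iff hr).2 (scan_halts_nine hl)) ?_
    exact fun hh => h.elim (hh u hu).1 (hh u hu).2

end Scan

/-! ### Configurations that the relations cannot distinguish -/

section Similar

variable {α : Type} {k₁ k₂ a b : α}

/-- Two configurations are similar if labels and index registers coincide and corresponding
registers satisfy the same unary relations `r_a` and `r_b`. -/
structure SimilarConfig (x y : Config (A23 α k₁ k₂ a b)) : Prop where
  label : x.label = y.label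
  idx : x.idx = y.idx
  reg_a : ∀ i, x.reg i = a ↔ y.reg i = a
  reg_b : ∀ i, x.reg i = b ↔ y.reg i = b

lemma SimilarConfig.symm {x y : Config (A23 α k₁ k₂ a b)} (h : SimilarConfig x y) : SimilarConfig y x :=
  ⟨h.label.symm, h.idx.symm, fun i => (h.reg_a i).symm, fun i => (h.reg_b i).symm⟩

lemma SimilarConfig.rels_iff {x y : Config (A23 α k₁ k₂ a b)} (h : SimilarConfig x y) (i : Fin 2)
    (args : List ℕ) : (A23 α k₁ k₂ a b).rels i (args.map x.reg) ↔
      (A23 α k₁ k₂ a b).rels i (args.map y.reg) := by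
  have key : ∀ (f g : ℕ → α) (w : α), (∀ n, f n = w ↔ g n = w) →
      (args.map f = [w] ↔ args.map g = [w]) := by
    intro f g w hw
    simp only [List.map_eq_singleton_iff, hw]
  show (if i = 0 then args.map x.reg = [a] else args.map x.reg = [b]) ↔
    (if i = 0 then args.map y.reg = [a] else args.map y.reg = [b])
  split_ifs
  · exact key x.reg y.reg a h.reg_a
  · exact key x.reg y.reg b h.reg_b

lemma SimilarConfig.execDet {x y : Config (A23 α k₁ k₂ a b)} (h : SimilarConfig x y)
    (ins : Instr (A23 α k₁ k₂ a b)) : SimilarConfig (execDet ins x) (execDet ins y) := by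
  obtain ⟨l, ix, r⟩ := x
  obtain ⟨l', ix', r'⟩ := y
  have hrel := h.rels_iff
  obtain ⟨hl, hi, ha, hb⟩ := h
  dsimp only at hl hi ha hb hrel
  subst hl hi
  cases ins with
  | apply j i args => exact i.elim
  | const j i =>
    refine ⟨rfl, rfl, fun n => ?_, fun n => ?_⟩ <;>
      by_cases hn : n = j <;> simp [_root_.execDet, hn, ha, hb]
  | copy j k =>
    refine ⟨rfl, rfl, fun n => ?_, fun n => ?_⟩ <;>
      by_cases hn : n = ix j <;> simp [_root_.execDet, hn, ha, hb]
  | branchRel i args l₁ l₂ =>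
    classical
    exact ⟨by simpa only [_root_.execDet] using if_congr (hrel i args) rfl rfl, rfl, ha, hb⟩
  | _ => exact ⟨rfl, rfl, ha, hb⟩

lemma SimilarConfig.haltsFrom {M : Machine (A23 α k₁ k₂ a b)} (hM : M.Det)
    {x y : Config (A23 α k₁ k₂ a b)} (h : SimilarConfig x y) (hx : HaltsFrom M x) : HaltsFrom M y := by
  obtain ⟨x', hr, hh⟩ := hx
  induction hr using Relation.ReflTransGen.head_induction_on generalizing y with
  | refl => exact ⟨y, .refl, hh.trans_eq h.label⟩
  | head hs _ ih =>
    obtain ⟨ins, hins, rfl⟩ := hM.nstep_iff.1 hs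
    obtain ⟨y', hy', hhy⟩ := ih (h.execDet ins)
    exact ⟨y', .head (hM.nstep_iff.2 ⟨ins, h.label ▸ hins, rfl⟩) hy', hhy⟩

lemma similar_singleton {u v : α} (ha : u = a ↔ v = a) (hb : u = b ↔ v = b)
    (hu : [u] ≠ []) (hv : [v] ≠ []) :
    SimilarConfig (inputConfig (A23 α k₁ k₂ a b) ⟨[u], hu⟩) (inputConfig _ ⟨[v], hv⟩) := by
  have key : ∀ (w : α) (i : ℕ), [w].getD i w = w := by
    rintro w (_ | i) <;> rfl
  refine ⟨rfl, rfl, fun i => ?_, fun i => ?_⟩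
  · show [u].getD i u = a ↔ [v].getD i v = a
    rwa [key, key]
  · show [u].getD i u = b ↔ [v].getD i v = b
    rwa [key, key]

end Similar

/-- Example: a structure with (e) in which (d) does not
hold.  For the finite structure `𝒜₃ = ({a,b,c,d}; c, d;; r_a, r_b)` with
four distinct elements, constants `c`, `d`, and `r_a = {a}`, `r_b = {b}`:
`{c,d}^∞` is semi-decidable and its complement is semi-decidable, any
deterministic machine behaves identically on the inputs `c` and `d`, and the
singleton `{c}` is not semi-decidable by any BSS RAM in `M_{𝒜₃}`.  Hence (e)
can hold while (d) fails. -/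
theorem A3_pair_semidecidable_but_singleton_not
    (α : Type) (a b c d : α)
    (hab : a ≠ b) (hac : a ≠ c) (had : a ≠ d)
    (hbc : b ≠ c) (hbd : b ≠ d) (hcd : c ≠ d)
    (hcover : ∀ x : α, x = a ∨ x = b ∨ x = c ∨ x = d) :
    binTups (A23 α c d a b) c d ∈ SDEC (A23 α c d a b) ∧
    (binTups (A23 α c d a b) c d)ᶜ ∈ SDEC (A23 α c d a b) ∧
    (∀ M : Machine (A23 α c d a b), M.Det →
      (HaltsFrom M (inputConfig (A23 α c d a b) ⟨[c], by simp⟩) ↔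
        HaltsFrom M (inputConfig (A23 α c d a b) ⟨[d], by simp⟩))) ∧
    singSet (A23 α c d a b) c ∉ SDEC (A23 α c d a b) := by
  have hbin : ∀ x : Tup (A23 α c d a b),
      x ∈ binTups (A23 α c d a b) c d ↔ ∀ u ∈ x.1, u ≠ a ∧ u ≠ b := by
    refine fun x => forall₂_congr fun u _ => ⟨?_, fun ⟨ha, hb⟩ => ?_⟩
    · rintro (h | h)
      · exact ⟨fun ha => hac (ha.symm.trans h), fun hb => hbc (hb.symm.trans h)⟩
      · exact ⟨fun ha => had (ha.symm.trans h), fun hb => hbd (hb.symm.trans h)⟩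
    · exact ((hcover u).resolve_left ha).resolve_left hb
  have hsim : ∀ M : Machine (A23 α c d a b), M.Det →
      (HaltsFrom M (inputConfig (A23 α c d a b) ⟨[c], by simp⟩) ↔
        HaltsFrom M (inputConfig (A23 α c d a b) ⟨[d], by simp⟩)) := by
    intro M hM
    have h := similar_singleton (k₁ := c) (k₂ := d) (iff_of_false hac.symm had.symm)
      (iff_of_false hbc.symm hbd.symm) (List.cons_ne_nil c []) (List.cons_ne_nil d [])
    exact ⟨h.haltsFrom hM, h.symm.haltsFrom hM⟩
  refine ⟨⟨scan α c d a b 9 6, scan_det _ _, fun x => (hbin x).trans (scan_accepts x).symm⟩,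
    ⟨scan α c d a b 6 9, scan_det _ _, fun x => (hbin x).not.trans (scan_rejects x).symm⟩,
    hsim, ?_⟩
  rintro ⟨M, hM, h⟩
  have hd : (⟨[d], by simp⟩ : Tup (A23 α c d a b)) ∈ singSet (A23 α c d a b) c :=
    (h _).2 ((hsim M hM).1 ((h _).1 rfl))
  exact hcd (List.cons.inj hd).1.symm
end

section
/- Let 𝒜 be any first-order structure. If the identity relation id_{U_𝒜} is semi-decidable by a BSS RAM in M_𝒜, then the complement of id_{U_𝒜} is also semi-decidable over 𝒜, and thus id_{U_𝒜} ∈ DEC_𝒜. (In particular, for structures in Struc_{c1,c2}, properties (b) 'id_{U_𝒜} ∈ DEC_𝒜' and (c) 'id_{U_𝒜} ∈ SDEC_𝒜' are equivalent.) -/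
namespace IdSim

variable {A : FOStruct}

/-! ### Deterministic machines -/

theorem nstep_det_iff {M : Machine A} {c c' : Config A} (hM : M.Det) :
    NStep M c c' ↔ ∃ ins, M.prog[c.label]? = some ins ∧ c' = execDet ins c := by
  unfold NStep
  refine exists_congr fun ins => and_congr_right fun h => ?_
  have hd := hM ins (List.mem_of_getElem? h)
  cases ins <;> simp_all [Instr.isDet]

theorem reaches_exec {M : Machine A} (hM : M.Det) {c : Config A} {ins : Instr A}
    (h : M.prog[c.label]? = some ins) : Reaches M c (execDet ins c) :=
  Relation.ReflTransGen.single ((nstep_det_iff hM).2 ⟨ins, h, rfl⟩)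

theorem haltsFrom_of_reaches {M : Machine A} {c c' : Config A} (h : Reaches M c c')
    (h' : HaltsFrom M c') : HaltsFrom M c := by
  obtain ⟨d, hd, hh⟩ := h'
  exact ⟨d, h.trans hd, hh⟩

/-- By determinism, a halting computation passes through every configuration reachable from its
start. -/
theorem haltsFrom_iff_of_reaches {M : Machine A} (hM : M.Det) {c c' : Config A}
    (h : Reaches M c c') : HaltsFrom M c ↔ HaltsFrom M c' := by
  refine ⟨?_, haltsFrom_of_reaches h⟩
  induction h using Relation.ReflTransGen.head_induction_on with
  | refl => exact id
  | head hs _ ih =>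
    rintro ⟨d, hd, hh⟩
    apply ih
    obtain ⟨ins, hi, rfl⟩ := (nstep_det_iff hM).1 hs
    rcases Relation.ReflTransGen.cases_head hd with rfl | ⟨e, he, hed⟩
    · have := List.getElem?_eq_none hh
      simp_all
    · obtain ⟨ins', hi', rfl⟩ := (nstep_det_iff hM).1 he
      obtain rfl : ins = ins' := by simpa [hi] using hi'
      exact ⟨d, hed, hh⟩

/-- Instructions that always pass control to the next label. -/
def Straight : Instr A → Prop
  | .apply _ _ _ | .const _ _ | .copy _ _ | .incIdx _ | .resetIdx _ => True
  | _ => False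

/-- The effect of a list of instructions executed one after the other. -/
noncomputable def runList (code : List (Instr A)) (c : Config A) : Config A :=
  code.foldl (fun c i => execDet i c) c

theorem label_execDet {ins : Instr A} (h : Straight ins) (c : Config A) :
    (execDet ins c).label = c.label + 1 := by
  cases ins <;> simp_all [Straight, execDet]

theorem label_runList : ∀ (code : List (Instr A)) (c : Config A), (∀ ins ∈ code, Straight ins) →
    (runList code c).label = c.label + code.length
  | [], _, _ => rfl
  | i :: code, c, h => by
    have h2 := label_runList code (execDet i c) fun ins hi => h ins (by simp [hi])
    rw [label_execDet (h i (by simp))] at h2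
    simp only [runList, List.foldl_cons, List.length_cons] at h2 ⊢
    omega

theorem reaches_runList {M : Machine A} (hM : M.Det) :
    ∀ (code : List (Instr A)) (c : Config A), (∀ ins ∈ code, Straight ins) →
      (∀ i (hi : i < code.length), M.prog[c.label + i]? = some code[i]) →
      Reaches M c (runList code c)
  | [], _, _, _ => Relation.ReflTransGen.refl
  | i :: code, c, hs, h => by
    have h0 := h 0 (by simp)
    refine (reaches_exec hM h0).trans
      (reaches_runList hM code _ (fun ins hi => hs ins (by simp [hi])) fun k hk => ?_)
    have hk' := h (k + 1) (by simpa using hk)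
    rw [List.getElem_cons_zero, label_execDet (hs i (by simp))]
    rw [Nat.add_assoc, Nat.add_comm 1 k]
    simpa using hk'

/-! ### The simulating machine -/

/-- The label at which block `b` starts. -/
def pos (b : ℕ) : ℕ := 2 + 6 * b

/-- The stop label of the simulating machine, where `N` is a bound on the index registers and `L`
the length of the simulated program. -/
def haltLabel (N L : ℕ) : ℕ := pos (N + 1 + L) + 1

/-- The label simulating label `l`. Blocks `0, …, N` perform the initialisation, and all halted
labels are represented by block `N + 1 + L`. -/
def tgt (N L l : ℕ) : ℕ := pos (N + 1 + min l L)

/-- The code, starting at label `p`, that simulates an instruction on both copies. A relational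
branching whose outcomes on the two copies differ leads to the stop label. -/
def simCode (N L p : ℕ) : Instr A → List (Instr A)
  | .apply j i args =>
      [.apply (2 * j) i (args.map fun a => 2 * a),
        .apply (2 * j + 1) i (args.map fun a => 2 * a + 1)]
  | .const j i => [.const (2 * j) i, .const (2 * j + 1) i]
  | .copy j k => [.copy (2 * j) (2 * k), .copy (2 * j + 1) (2 * k + 1)]
  | .branchRel i args l₁ l₂ =>
      [.branchRel i (args.map fun a => 2 * a) (p + 1) (p + 2),
        .branchRel i (args.map fun a => 2 * a + 1) (tgt N L l₁) (haltLabel N L),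
        .branchRel i (args.map fun a => 2 * a + 1) (haltLabel N L) (tgt N L l₂)]
  | .branchIdx j k l₁ l₂ => [.branchIdx (2 * j) (2 * k) (tgt N L l₁) (tgt N L l₂)]
  | .incIdx j => [.incIdx (2 * j), .incIdx (2 * j), .incIdx (2 * j + 1), .incIdx (2 * j + 1)]
  | .resetIdx j =>
      [.resetIdx (2 * j), .incIdx (2 * j), .resetIdx (2 * j + 1), .incIdx (2 * j + 1),
        .incIdx (2 * j + 1)]
  | _ => []

/-- The instruction simulated by block `b`: the first `N + 1` blocks set the index registers to
`(1, 2, 1, …, 1)`, the initial values for inputs of length `2`; then comes the program, followed by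
an infinite loop. -/
def virt (N : ℕ) (P : List (Instr A)) (b : ℕ) : Instr A :=
  if b < N then .resetIdx b else if b = N then .incIdx 1 else
    P.getD (b - (N + 1)) (.branchIdx 0 0 P.length P.length)

/-- The instruction at offset `r` of block `b`; blocks are padded by jumps to the next block. -/
def blk (N : ℕ) (P : List (Instr A)) (b r : ℕ) : Instr A :=
  (simCode N P.length (pos b) (virt N P b)).getD r (.branchIdx 0 0 (pos (b + 1)) (pos (b + 1)))

/-- The instruction at a given label. The first two instructions accept the inputs whose length is
not `2`. -/
def simInstr (N : ℕ) (P : List (Instr A)) : ℕ → Instr A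
  | 0 => .incIdx 0
  | 1 => .branchIdx 0 1 2 (haltLabel N P.length)
  | n + 2 => blk N P (n / 6) (n % 6)

/-- The machine simulating the program `P` on two copies. -/
def simM (N : ℕ) (P : List (Instr A)) : Machine A where
  prog := (List.range (haltLabel N P.length)).map (simInstr N P)
  oracle := ∅

variable {N : ℕ} {P : List (Instr A)}

theorem simM_length : (simM N P).prog.length = haltLabel N P.length := by simp [simM]

theorem simM_get {n : ℕ} (h : n < haltLabel N P.length) :
    (simM N P).prog[n]? = some (simInstr N P n) := by
  simp [simM, h]

theorem simM_get_blk {b r : ℕ} (hb : b ≤ N + P.length) (hr : r < 6) :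
    (simM N P).prog[pos b + r]? = some (blk N P b r) := by
  rw [simM_get (by unfold haltLabel pos; omega)]
  have : pos b + r = (6 * b + r) + 2 := by unfold pos; omega
  rw [this, simInstr]
  congr 2 <;> omega

theorem simCode_det {L p : ℕ} {ins i : Instr A} (h : i ∈ simCode N L p ins) : i.isDet := by
  cases ins <;> simp only [simCode, List.mem_cons, List.not_mem_nil, or_false] at h <;>
    (try rcases h with rfl | rfl | rfl | rfl | rfl) <;> trivial

theorem simM_det : (simM N P).Det := by
  intro ins h
  simp only [simM, List.mem_map] at h
  obtain ⟨n, -, rfl⟩ := h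
  match n with
  | 0 => trivial
  | 1 => trivial
  | n + 2 =>
    simp only [simInstr, blk, List.getD_eq_getElem?_getD]
    rcases h : (simCode N P.length (pos (n / 6)) (virt N P (n / 6)))[n % 6]? with _ | i
    · trivial
    · exact simCode_det (List.mem_of_getElem? h)

theorem simM_get_code {b r : ℕ} {ins i : Instr A} (hb : b ≤ N + P.length)
    (hv : virt N P b = ins) (hi : (simCode N P.length (pos b) ins)[r]? = some i) (hr : r < 6) :
    (simM N P).prog[pos b + r]? = some i := by
  rw [simM_get_blk hb hr, blk, hv, List.getD_eq_getElem?_getD, hi]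
  rfl

theorem virt_prog {l : ℕ} {ins : Instr A} (h : P[l]? = some ins) :
    virt N P (N + 1 + l) = ins := by
  have h1 : ¬ N + 1 + l < N := by omega
  have h2 : N + 1 + l ≠ N := by omega
  simp [virt, h1, h2, h]

/-- A block without branchings is executed completely and control passes to the next block. -/
theorem reaches_block {b : ℕ} {ins : Instr A} {c : Config A} (hb : b ≤ N + P.length)
    (hv : virt N P b = ins) (hc : c.label = pos b)
    (hs : ∀ i ∈ simCode N P.length (pos b) ins, Straight i)
    (hlen : (simCode N P.length (pos b) ins).length < 6) :
    Reaches (simM N P) c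
      { runList (simCode N P.length (pos b) ins) c with label := pos (b + 1) } := by
  refine (reaches_runList simM_det _ c hs fun i hi => ?_).trans ?_
  · rw [hc]
    exact simM_get_code hb hv (List.getElem?_eq_getElem hi) (by omega)
  · have hl := label_runList _ c hs
    have h : (simM N P).prog[(runList (simCode N P.length (pos b) ins) c).label]? =
        some (.branchIdx 0 0 (pos (b + 1)) (pos (b + 1))) := by
      rw [hl, hc, simM_get_blk hb hlen, blk, hv]
      simp
    have hr := reaches_exec simM_det h
    simp only [execDet, if_true] at hr
    exact hr

/-! ### Correctness of the simulation -/

/-- A bound on the index registers used by an instruction. -/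
def idxBound : Instr A → ℕ
  | .copy j k => max j k + 1
  | .branchIdx j k _ _ => max j k + 1
  | .incIdx j => j + 1
  | .resetIdx j => j + 1
  | _ => 0

/-- The configuration `c` of the simulating machine represents the configurations `a` and `b`,
which agree in their labels and index registers. -/
structure Sim (N L : ℕ) (c a b : Config A) : Prop where
  label : c.label = tgt N L a.label
  label_eq : b.label = a.label
  idx_eq : b.idx = a.idx
  idx₁ : ∀ j < N, c.idx (2 * j) = 2 * a.idx j
  idx₂ : ∀ j < N, c.idx (2 * j + 1) = 2 * a.idx j + 1
  reg₁ : ∀ i, c.reg (2 * i) = a.reg i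
  reg₂ : ∀ i, c.reg (2 * i + 1) = b.reg i

/-- One step of the simulation: the invariant is preserved, or the two runs have separated and the
simulating machine halts. -/
theorem sim_step {c a b : Config A} (h : Sim N P.length c a b) {ins : Instr A}
    (hins : P[a.label]? = some ins) (hdet : ins.isDet) (hN : idxBound ins ≤ N) :
    (∃ c', Reaches (simM N P) c c' ∧ Sim N P.length c' (execDet ins a) (execDet ins b)) ∨
      (a ≠ b ∧ HaltsFrom (simM N P) c) := by
  obtain ⟨h1, h2, h3, h4, h5, h6, h7⟩ := h
  have hlt : a.label < P.length := (List.getElem?_eq_some_iff.1 hins).1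
  have hv := virt_prog (N := N) hins
  have hb : N + 1 + a.label ≤ N + P.length := by omega
  have hc : c.label = pos (N + 1 + a.label) := by rw [h1, tgt, min_eq_left hlt.le]
  have hnext : pos (N + 1 + a.label + 1) = tgt N P.length (a.label + 1) := by
    rw [tgt, min_eq_left (by omega)]; rfl
  cases ins with
  | orGoto => exact hdet.elim
  | nuGuess => exact hdet.elim
  | apply j i args =>
    refine .inl ⟨_, reaches_block hb hv hc (by simp [simCode, Straight]) (by simp [simCode]), ?_⟩
    have e1 : (args.map fun a => 2 * a).map c.reg = args.map a.reg := by
      simp [Function.comp_def, h6]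
    have e2 : ∀ u, (args.map fun a => 2 * a + 1).map (Function.update c.reg (2 * j) u)
        = args.map b.reg := by
      intro u
      rw [List.map_map]
      refine List.map_congr_left fun k _ => ?_
      rw [Function.comp_apply, Function.update_of_ne (by omega), h7]
    constructor <;>
      simp only [runList, simCode, execDet, List.foldl, e1, e2, Function.update_apply] <;>
      grind
  | const j i =>
    refine .inl ⟨_, reaches_block hb hv hc (by simp [simCode, Straight]) (by simp [simCode]), ?_⟩
    constructor <;>
      simp only [runList, simCode, execDet, List.foldl, Function.update_apply] <;>
      grind
  | copy j k =>
    refine .inl ⟨_, reaches_block hb hv hc (by simp [simCode, Straight]) (by simp [simCode]), ?_⟩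
    simp only [idxBound] at hN
    have hj := h4 j (by omega)
    have hj' := h5 j (by omega)
    have hk := h4 k (by omega)
    have hk' := h5 k (by omega)
    constructor <;>
      simp only [runList, simCode, execDet, List.foldl, Function.update_apply] <;>
      grind
  | incIdx j =>
    refine .inl ⟨_, reaches_block hb hv hc (by simp [simCode, Straight]) (by simp [simCode]), ?_⟩
    constructor <;>
      simp only [runList, simCode, execDet, List.foldl, Function.update_apply] <;>
      grind
  | resetIdx j =>
    refine .inl ⟨_, reaches_block hb hv hc (by simp [simCode, Straight]) (by simp [simCode]), ?_⟩
    constructor <;>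
      simp only [runList, simCode, execDet, List.foldl, Function.update_apply] <;>
      grind
  | branchIdx j k l₁ l₂ =>
    simp only [idxBound] at hN
    have g0 := simM_get_code hb hv (r := 0) rfl (by omega)
    rw [add_zero, ← hc] at g0
    refine .inl ⟨_, reaches_exec simM_det g0, ?_⟩
    have hj := h4 j (by omega)
    have hk := h4 k (by omega)
    constructor <;> dsimp only [execDet] <;> grind
  | branchRel i args l₁ l₂ =>
    have e1 : (args.map fun a => 2 * a).map c.reg = args.map a.reg := by
      simp [Function.comp_def, h6]
    have e2 : (args.map fun a => 2 * a + 1).map c.reg = args.map b.reg := by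
      simp [Function.comp_def, h7]
    have g0 := simM_get_code hb hv (r := 0) rfl (by omega)
    have g1 := simM_get_code hb hv (r := 1) rfl (by omega)
    have g2 := simM_get_code hb hv (r := 2) rfl (by omega)
    rw [add_zero, ← hc] at g0
    have r0 := reaches_exec simM_det g0
    simp only [execDet] at r0
    rw [e1] at r0
    have r1 := reaches_exec (simM_det (N := N) (P := P))
      (c := { c with label := pos (N + 1 + a.label) + 1 }) g1
    have r2 := reaches_exec (simM_det (N := N) (P := P))
      (c := { c with label := pos (N + 1 + a.label) + 2 }) g2
    simp only [execDet] at r1 r2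
    rw [e2] at r1 r2
    rw [hc] at r0
    by_cases ha : A.rels i (args.map a.reg) <;> by_cases hb' : A.rels i (args.map b.reg)
    · rw [if_pos ha] at r0
      rw [if_pos hb'] at r1
      refine .inl ⟨_, r0.trans r1, ?_⟩
      constructor <;> simp only [execDet, if_pos ha, if_pos hb'] <;> assumption
    · rw [if_pos ha] at r0
      rw [if_neg hb'] at r1
      refine .inr ⟨?_, _, r0.trans r1, simM_length.le⟩
      rintro rfl
      exact hb' ha
    · rw [if_neg ha] at r0
      rw [if_pos hb'] at r2
      refine .inr ⟨?_, _, r0.trans r2, simM_length.le⟩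
      rintro rfl
      exact ha hb'
    · rw [if_neg ha] at r0
      rw [if_neg hb'] at r2
      refine .inl ⟨_, r0.trans r2, ?_⟩
      constructor <;> simp only [execDet, if_neg ha, if_neg hb'] <;> assumption

/-- If the second run halts and the first does not, the simulation halts. -/
theorem sim_halts {M : Machine A} (hM : M.Det) (hN : ∀ ins ∈ M.prog, idxBound ins ≤ N)
    {b d : Config A} (hbd : Reaches M b d) (hd : Halted M d) :
    ∀ c a, Sim N M.prog.length c a b → ¬ HaltsFrom M a → HaltsFrom (simM N M.prog) c := by
  induction hbd using Relation.ReflTransGen.head_induction_on with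
  | refl =>
    intro c a h ha
    refine (ha ⟨a, .refl, ?_⟩).elim
    rw [Halted, ← h.label_eq]
    exact hd
  | head hs _ ih =>
    intro c a h ha
    obtain ⟨ins, hi, rfl⟩ := (nstep_det_iff hM).1 hs
    rw [h.label_eq] at hi
    have hmem := List.mem_of_getElem? hi
    rcases sim_step h hi (hM _ hmem) (hN _ hmem) with ⟨c', hr, h'⟩ | ⟨-, hhalt⟩
    · refine haltsFrom_of_reaches hr (ih c' _ h' fun hh => ha ?_)
      exact haltsFrom_of_reaches (reaches_exec hM hi) hh
    · exact hhalt

/-- The block representing the halted labels is an infinite loop. -/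
theorem not_halts_loop {c : Config A} (hc : c.label = pos (N + 1 + P.length)) :
    ¬ HaltsFrom (simM N P) c := by
  rintro ⟨d, hd, hh⟩
  have hget : (simM N P).prog[c.label]? =
      some (.branchIdx 0 0 (pos (N + 1 + P.length)) (pos (N + 1 + P.length))) := by
    rw [hc, simM_get (by unfold haltLabel; omega)]
    have h1 : ¬ N + 1 + P.length < N := by omega
    have h2 : N + 1 + P.length ≠ N := by omega
    have h3 : pos (N + 1 + P.length) = 6 * (N + 1 + P.length) + 2 := by unfold pos; omega
    rw [h3, simInstr]
    simp [blk, virt, h1, h2, simCode, tgt, h3]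
  have hstay : d = c := by
    clear hh
    induction hd with
    | refl => rfl
    | tail _ hs ih =>
      obtain ⟨ins, hi, rfl⟩ := (nstep_det_iff simM_det).1 hs
      rw [ih, hget] at hi
      obtain rfl := Option.some.inj hi
      rw [ih]
      simp [execDet, ← hc]
  subst hstay
  rw [Halted, simM_length, hc, haltLabel] at hh
  omega

/-- If the two runs coincide and halt, the simulation does not halt. -/
theorem sim_not_halts {M : Machine A} (hM : M.Det) (hN : ∀ ins ∈ M.prog, idxBound ins ≤ N)
    {b d : Config A} (hbd : Reaches M b d) (hd : Halted M d) :
    ∀ c, Sim N M.prog.length c b b → ¬ HaltsFrom (simM N M.prog) c := by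
  induction hbd using Relation.ReflTransGen.head_induction_on with
  | refl =>
    intro c h
    refine not_halts_loop ?_
    rw [h.label, tgt, min_eq_right hd]
  | head hs _ ih =>
    intro c h
    obtain ⟨ins, hi, rfl⟩ := (nstep_det_iff hM).1 hs
    have hmem := List.mem_of_getElem? hi
    rcases sim_step h hi (hM _ hmem) (hN _ hmem) with ⟨c', hr, h'⟩ | ⟨hne, -⟩
    · rw [haltsFrom_iff_of_reaches simM_det hr]
      exact ih _ h'
    · exact (hne rfl).elim

/-- The first `n` initialisation blocks give the index registers below `n` the value `1`. -/
theorem reaches_reset {c : Config A} (hc : c.label = pos 0) :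
    ∀ n ≤ N, ∃ c', Reaches (simM N P) c c' ∧ c'.label = pos n ∧ c'.reg = c.reg ∧
      ∀ j < n, c'.idx (2 * j) = 2 ∧ c'.idx (2 * j + 1) = 3
  | 0, _ => ⟨c, .refl, hc, rfl, by simp⟩
  | n + 1, hn => by
    obtain ⟨c', hr, hl, hreg, hidx⟩ := reaches_reset hc n (by omega)
    have hv : virt N P n = .resetIdx n := by simp [virt, show n < N by omega]
    refine ⟨_, hr.trans (reaches_block (by omega) hv hl (by simp [simCode, Straight])
      (by simp [simCode])), rfl, ?_, ?_⟩
    · simpa [runList, simCode, execDet] using hreg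
    · simp only [runList, simCode, execDet, List.foldl, Function.update_apply]
      grind

/-- On input `(x, y)`, the initialisation establishes the invariant for the runs on `(x, y)` and
`(y, y)`. -/
theorem reaches_sim {x y : A.U} (hN : 2 ≤ N) :
    ∃ c, Reaches (simM N P) (inputConfig A ⟨[x, y], by simp⟩) c ∧
      Sim N P.length c (inputConfig A ⟨[x, y], by simp⟩) (inputConfig A ⟨[y, y], by simp⟩) := by
  have hpos : 1 < haltLabel N P.length := by unfold haltLabel pos; omega
  have r0 := reaches_exec (simM_det (N := N) (P := P))
    (c := inputConfig A ⟨[x, y], by simp⟩) (simM_get (by show 0 < _; omega))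
  have r1 := r0.trans (reaches_exec (simM_det (N := N) (P := P)) (simM_get (by exact hpos)))
  simp only [simInstr, execDet, inputConfig, zero_add] at r1
  obtain ⟨c, hr, hl, hreg, hidx⟩ := reaches_reset (N := N) (P := P) (c := {
    label := pos 0
    idx := Function.update (fun j => if j = 1 then 2 else 1) 0 2
    reg := fun i => [x, y].getD i y }) rfl N le_rfl
  have hv : virt N P N = .incIdx 1 := by simp [virt]
  have r2 := reaches_block (c := c) (by omega) hv hl (by simp [simCode, Straight])
      (by simp [simCode])
  refine ⟨_, .trans (by simpa [inputConfig, pos] using r1) (hr.trans r2), ?_⟩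
  -- Outside register `0` both inputs, and the padding, are constantly `y`.
  have hy : ∀ i z, i ≠ 0 → [z, y].getD i y = y := by
    intro i z hi
    match i with
    | 1 => rfl
    | i + 2 => rfl
  constructor <;>
    simp only [runList, simCode, execDet, List.foldl, Function.update_apply, inputConfig, hreg]
  · simp [tgt]
  · rfl
  · intro j hj
    have := hidx j hj
    grind
  · intro j hj
    have := hidx j hj
    grind
  · intro i
    rcases eq_or_ne i 0 with rfl | hi
    · rfl
    · exact (hy _ _ (by omega)).trans (hy _ _ hi).symm
  · intro i
    rcases eq_or_ne i 0 with rfl | hi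
    · rfl
    · exact (hy _ _ (by omega)).trans (hy _ _ hi).symm

theorem halts_of_length_ne {x : Tup A} (hx : x.1.length ≠ 2) :
    HaltsFrom (simM N P) (inputConfig A x) := by
  have hpos : 1 < haltLabel N P.length := by unfold haltLabel pos; omega
  have r0 := reaches_exec (simM_det (N := N) (P := P))
    (c := inputConfig A x) (simM_get (by show 0 < _; omega))
  have r1 := r0.trans (reaches_exec (simM_det (N := N) (P := P)) (simM_get (by exact hpos)))
  refine ⟨_, r1, ?_⟩
  rw [Halted, simM_length]
  simp [execDet, simInstr, inputConfig, hx.symm]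

theorem compl_mem (h : idSet A ∈ SDEC A) : (idSet A)ᶜ ∈ SDEC A := by
  obtain ⟨M, hM, hx⟩ := h
  obtain ⟨N, hN2, hN⟩ : ∃ N, 2 ≤ N ∧ ∀ ins ∈ M.prog, idxBound ins ≤ N := by
    refine ⟨(M.prog.map idxBound).sum + 2, by omega, fun ins hi => ?_⟩
    have := List.single_le_sum (by simp) _ (List.mem_map_of_mem (f := idxBound) hi)
    omega
  refine ⟨simM N M.prog, simM_det, fun z => ?_⟩
  by_cases hz : z.1.length = 2
  · obtain ⟨l, hl⟩ := z
    obtain ⟨x, y, rfl⟩ := List.length_eq_two.1 hz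
    obtain ⟨c, hr, hs⟩ := reaches_sim (P := M.prog) (x := x) (y := y) hN2
    rw [haltsFrom_iff_of_reaches simM_det hr]
    obtain ⟨d, hd, hh⟩ := (hx ⟨[y, y], by simp⟩).1 ⟨y, rfl⟩
    refine ⟨fun hne => ?_, fun hhalt hmem => ?_⟩
    · exact sim_halts hM hN hd hh c _ hs fun h' => hne ((hx _).2 h')
    · obtain ⟨u, hu⟩ := hmem
      obtain rfl : x = y := by simp_all
      exact sim_not_halts hM hN hd hh c hs hhalt
  · refine ⟨fun _ => halts_of_length_ne hz, fun _ hmem => hz ?_⟩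
    obtain ⟨u, hu⟩ := hmem
    simp [hu]

end IdSim

/-- Theorem: Semi-deciding identity implies decidability.
Let `A` be any first-order structure.  If `id_{U_A}` is semi-decidable by a
BSS RAM in `M_A`, then the complement of `id_{U_A}` is also semi-decidable
over `A`, and thus `id_{U_A} ∈ DEC_A`. -/
theorem semidecidable_identity_is_decidable
    (A : FOStruct) (h : idSet A ∈ SDEC A) :
    (idSet A)ᶜ ∈ SDEC A ∧ idSet A ∈ DEC A :=
  ⟨IdSim.compl_mem h, h, IdSim.compl_mem h⟩
end
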